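/- Let p > n ≥ 2 and R > 0, and let B_R := {x ∈ ℝⁿ : |x| < R} with d(x) := R − |x| the distance to its boundary. There exist constants b = b(n,p) ≥ 1 and c = c(n,p) > 0 such that, with D := 2bR, for every u ∈ C_c^∞(B_R) and all x, y ∈ B_R with x ≠ y, one has |u(x) − u(y)| · X^{1/p}(|x−y|/D) ≤ c · |x−y|^{1−n/p} · ( ∫_{B_R} |∇u|^p dz − ((p−1)/p)^p ∫_{B_R} |u|^p / d^p dz )^{1/p}. -/

import Mathlib

open MeasureTheory Metric Set

open Module

open scoped Gradient ENNReal Pointwise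

/-!
On the unit ball write `d = 1 - ‖z‖` and `α = (p - 1) / p`, so that `d ^ α` is the ground state of
Hardy's inequality. Expanding the convex function `‖·‖ ^ p` of the gradient of `u` around the
reference gradient `α u d⁻¹ ∇d`, and integrating the linear term by parts, shows that the Hardy
difference `H` dominates, up to constants, both the `p`-th power of the twisted gradient
`d ^ α ∇(d ^ (-α) u)` (uniform convexity of `‖·‖ ^ p`, which needs `2 ≤ p`) and the mass
`∫ d ^ (1 - p) |u| ^ p` (curvature of the sphere).

Morrey's averaging argument from `x` to a fixed small ball, applied to the quotient `d ^ (-α) u`,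
meets the singular weight `d ^ (-α)` of its gradient along segments. Since `α + n / p > 1` this
gives `|u| ≤ C d ^ (1 - n / p) H ^ (1 / p)`. If `|x - y|` is not small compared with `d(x)`, this
bounds `u(x)` and `u(y)` separately; otherwise `∇u` differs from the twisted gradient by
`O(|u| / d)`, and the usual Morrey estimate on a ball around `x` applies. Radii other than `1`
follow by scaling, and the logarithmic factor is at most `1`.
-/

section Pointwise

variable {E : Type*} [NormedAddCommGroup E] [InnerProductSpace ℝ E] {p : ℝ}

theorem add_rpow_le_two_rpow_mul_add {a b : ℝ} (ha : 0 ≤ a) (hb : 0 ≤ b) (hp : 1 ≤ p) :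
    (a + b) ^ p ≤ 2 ^ (p - 1) * (a ^ p + b ^ p) := by
  lift a to NNReal using ha
  lift b to NNReal using hb
  exact_mod_cast NNReal.rpow_add_le_mul_rpow_add_rpow a b hp

theorem norm_add_rpow_add_norm_sub_rpow_le (hp : 2 ≤ p) (a b : E) :
    ‖a + b‖ ^ p + ‖a - b‖ ^ p ≤ 2 ^ (p - 1) * (‖a‖ ^ p + ‖b‖ ^ p) := by
  have sq_rpow : ∀ v : E, (‖v‖ ^ 2) ^ (p / 2) = ‖v‖ ^ p := fun v ↦ by
    rw [← Real.rpow_natCast_mul (norm_nonneg v)]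
    congr 1
    push_cast
    ring
  have parallelogram : ‖a + b‖ ^ 2 + ‖a - b‖ ^ 2 = 2 * (‖a‖ ^ 2 + ‖b‖ ^ 2) := by
    have := parallelogram_law_with_norm ℝ a b
    linarith
  calc ‖a + b‖ ^ p + ‖a - b‖ ^ p
      = (‖a + b‖ ^ 2) ^ (p / 2) + (‖a - b‖ ^ 2) ^ (p / 2) := by rw [sq_rpow, sq_rpow]
    _ ≤ (‖a + b‖ ^ 2 + ‖a - b‖ ^ 2) ^ (p / 2) :=
        Real.add_rpow_le_rpow_add (sq_nonneg _) (sq_nonneg _) (by linarith)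
    _ = 2 ^ (p / 2) * (‖a‖ ^ 2 + ‖b‖ ^ 2) ^ (p / 2) := by
        rw [parallelogram, Real.mul_rpow two_pos.le (by positivity)]
    _ ≤ 2 ^ (p / 2) * (2 ^ (p / 2 - 1) * ((‖a‖ ^ 2) ^ (p / 2) + (‖b‖ ^ 2) ^ (p / 2))) := by
        gcongr
        exact add_rpow_le_two_rpow_mul_add (sq_nonneg _) (sq_nonneg _) (by linarith)
    _ = 2 ^ (p - 1) * (‖a‖ ^ p + ‖b‖ ^ p) := by
        rw [sq_rpow, sq_rpow, ← mul_assoc, ← Real.rpow_add two_pos]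
        congr 2
        ring

theorem mul_norm_rpow_mul_inner_le (hp : 1 < p) (a w : E) :
    p * ‖w‖ ^ (p - 2) * inner ℝ w a ≤ ‖a‖ ^ p + (p - 1) * ‖w‖ ^ p := by
  have hp1 : p - 1 ≠ 0 := by linarith
  have young := Real.young_inequality_of_nonneg (norm_nonneg a)
    (Real.rpow_nonneg (norm_nonneg w) (p - 1)) (Real.HolderConjugate.conjExponent hp)
  rw [Real.conjExponent, ← Real.rpow_mul (norm_nonneg w), mul_div_cancel₀ _ hp1] at young
  calc p * ‖w‖ ^ (p - 2) * inner ℝ w a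
      ≤ p * ‖w‖ ^ (p - 2) * (‖w‖ * ‖a‖) := by gcongr; exact real_inner_le_norm w a
    _ = p * (‖a‖ * ‖w‖ ^ (p - 1)) := by
        rw [show p - 1 = p - 2 + 1 by ring,
          Real.rpow_add_one' (norm_nonneg w) (by rw [show p - 2 + 1 = p - 1 by ring]; exact hp1)]
        ring
    _ ≤ p * (‖a‖ ^ p / p + ‖w‖ ^ p / (p / (p - 1))) := by gcongr
    _ = ‖a‖ ^ p + (p - 1) * ‖w‖ ^ p := by field_simp

/- Apply the tangent inequality at the midpoint of `a` and `w`; the gap between the midpoint and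
the endpoints is what Clarkson's inequality controls. -/
theorem norm_sub_rpow_le (hp : 2 ≤ p) (a w : E) :
    ‖a - w‖ ^ p ≤
      2 ^ (p - 1) * (‖a‖ ^ p + (p - 1) * ‖w‖ ^ p - p * ‖w‖ ^ (p - 2) * inner ℝ w a) := by
  have clarkson := norm_add_rpow_add_norm_sub_rpow_le hp a w
  have tangent := mul_norm_rpow_mul_inner_le (by linarith : 1 < p) ((2⁻¹ : ℝ) • (a + w)) w
  have norm_sq : ‖w‖ ^ (p - 2) * ‖w‖ ^ 2 = ‖w‖ ^ p := by
    rw [← Real.rpow_add_natCast' (norm_nonneg w) (by push_cast; linarith)]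
    congr 1
    push_cast
    ring
  have norm_mid : 2 ^ (p - 1) * (2 * ‖(2⁻¹ : ℝ) • (a + w)‖ ^ p) = ‖a + w‖ ^ p := by
    rw [norm_smul, Real.mul_rpow (norm_nonneg _) (norm_nonneg _), norm_inv, Real.norm_two,
      Real.inv_rpow two_pos.le, Real.rpow_sub_one two_ne_zero]
    field_simp
  rw [inner_smul_right, inner_add_right, real_inner_self_eq_norm_sq] at tangent
  have tangent' : p * ‖w‖ ^ (p - 2) * inner ℝ w a ≤
      2 * ‖(2⁻¹ : ℝ) • (a + w)‖ ^ p + (p - 2) * ‖w‖ ^ p := by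
    linear_combination 2 * tangent - p * norm_sq
  have := mul_le_mul_of_nonneg_left tangent' (by positivity : (0 : ℝ) ≤ 2 ^ (p - 1))
  linear_combination clarkson + this + norm_mid

/-- The exponent of the ground state `d ^ α` of Hardy's inequality, where `d` is the distance to
the boundary; `α ^ p` is the optimal constant. -/
noncomputable def hardyExponent (p : ℝ) : ℝ := (p - 1) / p

theorem hardyExponent_pos (hp : 1 < p) : 0 < hardyExponent p :=
  div_pos (by linarith) (by linarith)

theorem hardyExponent_lt_one (hp : 0 < p) : hardyExponent p < 1 := by
  rw [hardyExponent, div_lt_one hp]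
  linarith

theorem natCast_sub_hardyExponent_pos (hp : 0 < p) {n : ℕ} (hn : 1 ≤ n) :
    0 < n - hardyExponent p :=
  sub_pos.2 ((hardyExponent_lt_one hp).trans_le (by exact_mod_cast hn))

theorem sub_one_mul_one_sub_hardyExponent (hp : p ≠ 0) :
    (p - 1) * (1 - hardyExponent p) = hardyExponent p := by
  rw [hardyExponent]
  field_simp
  ring

/-- The gradient of reference in Hardy's inequality on the unit ball for a function with value `t`
at `z`. It is `α t d⁻¹ ∇d` with `d = 1 - ‖z‖`, damped by the power of `‖z‖` for which
`‖w‖ ^ (p - 2) • w` is `z` times a function of `t` and `d`. -/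
noncomputable def hardyField (p t : ℝ) (z : E) : E :=
  -(hardyExponent p * t / (1 - ‖z‖) * ‖z‖ ^ (1 / (p - 1) - 1)) • z

/-- The integrand which Hardy's inequality on the unit ball discards, for a function with value `t`
and gradient `a` at `z`. -/
noncomputable def hardyRemainder (p t : ℝ) (a z : E) : ℝ :=
  ‖a‖ ^ p
    + hardyExponent p ^ (p - 1) * ((1 - ‖z‖) ^ (1 - p) * (p * |t| ^ (p - 2) * t * inner ℝ z a))
    + (p - 1) * hardyExponent p ^ p * (‖z‖ * (1 - ‖z‖) ^ (-p) * |t| ^ p)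

variable {z : E}

theorem norm_hardyField (hp : 1 < p) (t : ℝ) (hz : ‖z‖ < 1) :
    ‖hardyField p t z‖ = hardyExponent p * |t| / (1 - ‖z‖) * ‖z‖ ^ (1 / (p - 1)) := by
  have hβ : 1 / (p - 1) ≠ 0 := one_div_ne_zero (by linarith)
  rw [hardyField, norm_smul, Real.norm_eq_abs, abs_neg, abs_mul, abs_div, abs_mul,
    abs_of_pos (hardyExponent_pos hp), abs_of_pos (sub_pos.2 hz),
    abs_of_nonneg (Real.rpow_nonneg (norm_nonneg z) _), mul_assoc,
    ← Real.rpow_add_one' (norm_nonneg z) (by simpa using hβ), sub_add_cancel]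

theorem norm_hardyField_rpow_le (hp : 1 < p) (t : ℝ) (hz : ‖z‖ < 1) :
    ‖hardyField p t z‖ ^ p ≤ hardyExponent p ^ p * (‖z‖ * (1 - ‖z‖) ^ (-p) * |t| ^ p) := by
  have hα := hardyExponent_pos hp
  have hd : 0 < 1 - ‖z‖ := sub_pos.2 hz
  have damping : ‖z‖ ^ (1 / (p - 1) * p) ≤ ‖z‖ := by
    refine Real.rpow_le_self_of_le_one (norm_nonneg z) hz.le ?_
    rw [one_div_mul_eq_div, one_le_div (by linarith)]
    linarith
  calc ‖hardyField p t z‖ ^ p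
      = hardyExponent p ^ p * (‖z‖ ^ (1 / (p - 1) * p) * (1 - ‖z‖) ^ (-p) * |t| ^ p) := by
        rw [norm_hardyField hp t hz, Real.mul_rpow (by positivity) (by positivity),
          Real.div_rpow (by positivity) hd.le, Real.mul_rpow hα.le (abs_nonneg t),
          ← Real.rpow_mul (norm_nonneg z), Real.rpow_neg hd.le]
        ring
    _ ≤ _ := by gcongr

theorem norm_hardyField_rpow_mul_inner (hp : 1 < p) (t : ℝ) (a : E) (hz : ‖z‖ < 1) :
    ‖hardyField p t z‖ ^ (p - 2) * inner ℝ (hardyField p t z) a =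
      -(hardyExponent p ^ (p - 1) * ((1 - ‖z‖) ^ (1 - p) * (|t| ^ (p - 2) * t * inner ℝ z a))) := by
  rcases eq_or_ne z 0 with rfl | hz0
  · simp [hardyField]
  have hα := hardyExponent_pos hp
  have hd : 0 < 1 - ‖z‖ := sub_pos.2 hz
  have hp1 : p - 1 ≠ 0 := by linarith
  have cancel : ‖z‖ ^ (1 / (p - 1) * (p - 2)) * ‖z‖ ^ (1 / (p - 1) - 1) = 1 := by
    rw [← Real.rpow_add (norm_pos_iff.2 hz0), show 1 / (p - 1) * (p - 2) + (1 / (p - 1) - 1) = 0 by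
      field_simp; ring, Real.rpow_zero]
  have hαp : hardyExponent p ^ (p - 1) = hardyExponent p ^ (p - 2) * hardyExponent p := by
    rw [← Real.rpow_add_one hα.ne']
    congr 1
    ring
  have hdp : (1 - ‖z‖) ^ (1 - p) = ((1 - ‖z‖) ^ (p - 2))⁻¹ * (1 - ‖z‖)⁻¹ := by
    rw [← Real.rpow_neg hd.le, ← div_eq_mul_inv, ← Real.rpow_sub_one hd.ne']
    congr 1
    ring
  rw [norm_hardyField hp t hz, hardyField, inner_smul_left, Real.mul_rpow (by positivity)
    (by positivity), Real.div_rpow (by positivity) hd.le, Real.mul_rpow hα.le (abs_nonneg t),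
    ← Real.rpow_mul (norm_nonneg z), hαp, hdp, conj_trivial]
  linear_combination -(hardyExponent p ^ (p - 2) * |t| ^ (p - 2) / (1 - ‖z‖) ^ (p - 2)
    * (hardyExponent p * t / (1 - ‖z‖)) * inner ℝ z a) * cancel

theorem norm_sub_hardyField_rpow_le_hardyRemainder (hp : 2 ≤ p) (t : ℝ) (a : E) (hz : ‖z‖ < 1) :
    ‖a - hardyField p t z‖ ^ p ≤ 2 ^ (p - 1) * hardyRemainder p t a z := by
  have hp1 : 1 < p := by linarith
  refine (norm_sub_rpow_le hp a (hardyField p t z)).trans ?_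
  gcongr
  rw [hardyRemainder]
  linear_combination (p - 1) * norm_hardyField_rpow_le hp1 t hz
    - p * norm_hardyField_rpow_mul_inner hp1 t a hz

theorem hardyRemainder_nonneg (hp : 2 ≤ p) (t : ℝ) (a : E) (hz : ‖z‖ < 1) :
    0 ≤ hardyRemainder p t a z :=
  nonneg_of_mul_nonneg_right
    ((Real.rpow_nonneg (norm_nonneg _) p).trans
      (norm_sub_hardyField_rpow_le_hardyRemainder hp t a hz))
    (by positivity)

/- Both `2 s / (1 + s)` and `s ^ β` lie between `s` and `1`. This lets the difference of the two
fields below absorb the singular factor `(1 - ‖z‖)⁻¹`. -/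
theorem abs_two_div_sub_rpow_mul_le {s β : ℝ} (hs0 : 0 ≤ s) (hs1 : s ≤ 1) (hβ0 : 0 < β)
    (hβ1 : β ≤ 1) : |(2 / (1 + s) - s ^ (β - 1)) * s| ≤ 1 - s := by
  have rpow_le : s ^ β ≤ 1 := Real.rpow_le_one hs0 hs1 hβ0.le
  have le_rpow : s ≤ s ^ β := Real.self_le_rpow_of_le_one hs0 hs1 hβ1
  have two_div_le : 2 / (1 + s) * s ≤ 1 := by
    rw [div_mul_eq_mul_div, div_le_one (by linarith)]
    linarith
  have le_two_div : s ≤ 2 / (1 + s) * s :=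
    le_mul_of_one_le_left hs0 ((one_le_div (by linarith)).2 (by linarith))
  rw [sub_mul, ← Real.rpow_add_one' hs0 (by simpa using hβ0.ne'), sub_add_cancel, abs_le]
  constructor <;> linarith

theorem norm_smul_add_hardyField_le (hp : 2 ≤ p) (t : ℝ) (hz : ‖z‖ < 1) :
    ‖(2 * hardyExponent p * t / (1 - ‖z‖ ^ 2)) • z + hardyField p t z‖ ≤ |t| := by
  have hα := hardyExponent_pos (by linarith : 1 < p)
  have hd : 0 < 1 - ‖z‖ := sub_pos.2 hz
  have factor : (2 * hardyExponent p * t / (1 - ‖z‖ ^ 2)) • z + hardyField p t z =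
      (hardyExponent p * t / (1 - ‖z‖) * (2 / (1 + ‖z‖) - ‖z‖ ^ (1 / (p - 1) - 1))) • z := by
    rw [hardyField, ← add_smul, show 1 - ‖z‖ ^ 2 = (1 - ‖z‖) * (1 + ‖z‖) by ring]
    congr 1
    field_simp
    ring
  have weight_sub : |(2 / (1 + ‖z‖) - ‖z‖ ^ (1 / (p - 1) - 1)) * ‖z‖| ≤ 1 - ‖z‖ :=
    abs_two_div_sub_rpow_mul_le (norm_nonneg z) hz.le (one_div_pos.2 (by linarith))
      ((div_le_one (by linarith)).2 (by linarith))
  calc ‖(2 * hardyExponent p * t / (1 - ‖z‖ ^ 2)) • z + hardyField p t z‖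
      = hardyExponent p * |t| / (1 - ‖z‖) *
          |(2 / (1 + ‖z‖) - ‖z‖ ^ (1 / (p - 1) - 1)) * ‖z‖| := by
        rw [factor, norm_smul, Real.norm_eq_abs, abs_mul, abs_div, abs_mul, abs_of_pos hα,
          abs_of_pos hd, abs_mul, abs_norm]
        ring
    _ ≤ hardyExponent p * |t| / (1 - ‖z‖) * (1 - ‖z‖) := by gcongr
    _ = hardyExponent p * |t| := div_mul_cancel₀ _ hd.ne'
    _ ≤ |t| := mul_le_of_le_one_left (abs_nonneg t) (hardyExponent_lt_one (by linarith)).le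

theorem norm_add_smul_rpow_le_hardyRemainder_add (hp : 2 ≤ p) (t : ℝ) (a : E) (hz : ‖z‖ < 1) :
    ‖a + (2 * hardyExponent p * t / (1 - ‖z‖ ^ 2)) • z‖ ^ p ≤
      4 ^ p * hardyRemainder p t a z + 2 ^ p * |t| ^ p := by
  have split : a + (2 * hardyExponent p * t / (1 - ‖z‖ ^ 2)) • z =
      (a - hardyField p t z) +
        ((2 * hardyExponent p * t / (1 - ‖z‖ ^ 2)) • z + hardyField p t z) := by abel
  have two_rpow_le : (2 : ℝ) ^ (p - 1) ≤ 2 ^ p :=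
    Real.rpow_le_rpow_of_exponent_le one_le_two (by linarith)
  have hM := hardyRemainder_nonneg hp t a hz
  calc ‖a + (2 * hardyExponent p * t / (1 - ‖z‖ ^ 2)) • z‖ ^ p
      ≤ (‖a - hardyField p t z‖ + |t|) ^ p := by
        rw [split]
        gcongr
        exact (norm_add_le _ _).trans (by gcongr; exact norm_smul_add_hardyField_le hp t hz)
    _ ≤ 2 ^ (p - 1) * (‖a - hardyField p t z‖ ^ p + |t| ^ p) :=
        add_rpow_le_two_rpow_mul_add (norm_nonneg _) (abs_nonneg t) (by linarith)
    _ ≤ 2 ^ p * (2 ^ p * hardyRemainder p t a z + |t| ^ p) := by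
        gcongr
        exact (norm_sub_hardyField_rpow_le_hardyRemainder hp t a hz).trans (by gcongr)
    _ = 4 ^ p * hardyRemainder p t a z + 2 ^ p * |t| ^ p := by
        rw [show (4 : ℝ) = 2 * 2 by norm_num, Real.mul_rpow two_pos.le two_pos.le]
        ring

end Pointwise

section EulerField

variable {E : Type*} [NormedAddCommGroup E] [NormedSpace ℝ E]

theorem hasFDerivAt_clm_mul_zero {f : E → ℝ} (hf : ContinuousAt f 0) (φ : E →L[ℝ] ℝ) :
    HasFDerivAt (fun z ↦ φ z * f z) (f 0 • φ) 0 := by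
  rw [hasFDerivAt_iff_isLittleO_nhds_zero]
  have hφ : (fun h ↦ φ h) =O[nhds 0] fun h ↦ h := φ.isBigO_id _
  have hf0 : (fun h ↦ f h - f 0) =o[nhds 0] fun _ ↦ (1 : ℝ) := by
    rw [Asymptotics.isLittleO_one_iff]
    simpa using hf.tendsto.sub_const (f 0)
  refine ((hφ.norm_right.mul_isLittleO hf0).congr (fun h ↦ ?_) fun h ↦ ?_).of_norm_right
  · simp only [zero_add, map_zero, zero_mul, sub_zero, smul_apply, smul_eq_mul]
    ring
  · simp

theorem hasFDerivAt_clm_mul {f : E → ℝ} (hf : Continuous f)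
    (hd : ∀ z ≠ 0, DifferentiableAt ℝ f z) (φ : E →L[ℝ] ℝ) (z : E) :
    HasFDerivAt (fun z ↦ φ z * f z) (φ z • fderiv ℝ f z + f z • φ) z := by
  rcases eq_or_ne z 0 with rfl | hz
  · simpa using hasFDerivAt_clm_mul_zero hf.continuousAt φ
  · exact φ.hasFDerivAt.mul (hd z hz).hasFDerivAt

variable [MeasurableSpace E] [BorelSpace E] {μ : Measure E}

theorem integrable_clm_mul_fderiv {f : E → ℝ} (hint : Integrable (fun z ↦ ‖z‖ * ‖fderiv ℝ f z‖) μ)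
    (φ : E →L[ℝ] ℝ) (b : E) : Integrable (fun z ↦ φ z * fderiv ℝ f z b) μ := by
  refine (hint.const_mul (‖φ‖ * ‖b‖)).mono'
    (φ.continuous.measurable.mul (measurable_fderiv_apply_const ℝ f b)).aestronglyMeasurable
    (.of_forall fun z ↦ ?_)
  calc ‖φ z * fderiv ℝ f z b‖ ≤ (‖φ‖ * ‖z‖) * (‖fderiv ℝ f z‖ * ‖b‖) := by
        rw [norm_mul]
        gcongr
        exacts [φ.le_opNorm z, (fderiv ℝ f z).le_opNorm b]
    _ = ‖φ‖ * ‖b‖ * (‖z‖ * ‖fderiv ℝ f z‖) := by ring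

variable [FiniteDimensional ℝ E] [μ.IsAddHaarMeasure]

theorem integral_clm_mul_fderiv_apply {f : E → ℝ} (hf : Continuous f) (hfs : HasCompactSupport f)
    (hd : ∀ z ≠ 0, DifferentiableAt ℝ f z)
    (hint : Integrable (fun z ↦ ‖z‖ * ‖fderiv ℝ f z‖) μ) (φ : E →L[ℝ] ℝ) (b : E) :
    ∫ z, φ z * fderiv ℝ f z b ∂μ = -(φ b * ∫ z, f z ∂μ) := by
  have hfi : Integrable f μ := hf.integrable_of_hasCompactSupport hfs
  have hderiv : ∀ z, fderiv ℝ (fun z ↦ φ z * f z) z b = φ z * fderiv ℝ f z b + φ b * f z := by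
    intro z
    rw [(hasFDerivAt_clm_mul hf hd φ z).fderiv]
    simp only [add_apply, smul_apply, smul_eq_mul]
    ring
  have hsum : Integrable (fun z ↦ φ z * fderiv ℝ f z b + φ b * f z) μ :=
    (integrable_clm_mul_fderiv hint φ b).add (hfi.const_mul _)
  have hprod : Integrable (fun z ↦ φ z * f z) μ :=
    (φ.continuous.mul hf).integrable_of_hasCompactSupport hfs.mul_left
  have divergence : ∫ z, fderiv ℝ (fun z ↦ φ z * f z) z b ∂μ = 0 := by
    have := integral_mul_fderiv_eq_neg_fderiv_mul_of_integrable (μ := μ) (v := b)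
      (f := fun _ : E ↦ (1 : ℝ)) (g := fun z ↦ φ z * f z) (by simp)
      (by simpa only [one_mul, hderiv] using hsum)
      (by simpa only [one_mul] using hprod)
      (fun _ _ ↦ differentiableAt_const _)
      fun z _ ↦ (hasFDerivAt_clm_mul hf hd φ z).differentiableAt
    simpa using this
  simp only [hderiv] at divergence
  rw [integral_add (integrable_clm_mul_fderiv hint φ b) (hfi.const_mul _),
    integral_const_mul] at divergence
  linarith

theorem integral_fderiv_apply_self {f : E → ℝ} (hf : Continuous f) (hfs : HasCompactSupport f)
    (hd : ∀ z ≠ 0, DifferentiableAt ℝ f z)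
    (hint : Integrable (fun z ↦ ‖z‖ * ‖fderiv ℝ f z‖) μ) :
    ∫ z, fderiv ℝ f z z ∂μ = -(finrank ℝ E * ∫ z, f z ∂μ) := by
  set b := finBasis ℝ E
  set φ : Fin (finrank ℝ E) → E →L[ℝ] ℝ := fun i ↦ (b.coord i).toContinuousLinearMap with hφ
  have expand : ∀ z, fderiv ℝ f z z = ∑ i, φ i z * fderiv ℝ f z (b i) := by
    intro z
    rw [← congrArg (fderiv ℝ f z) (b.sum_repr z), map_sum]
    exact Finset.sum_congr rfl fun i _ ↦ by simp [hφ]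
  simp only [expand]
  rw [integral_finsetSum _ fun i _ ↦ integrable_clm_mul_fderiv hint (φ i) (b i)]
  simp only [integral_clm_mul_fderiv_apply hf hfs hd hint]
  simp [hφ]

end EulerField

section CompactSupport

theorem integrableOn_of_eq_zero_off_compact {X F : Type*} [TopologicalSpace X] [T2Space X]
    [MeasurableSpace X] [OpensMeasurableSpace X] [NormedAddCommGroup F] {μ : Measure X}
    [IsFiniteMeasureOnCompacts μ] {s K : Set X} (hs : MeasurableSet s) (hK : IsCompact K)
    (hKs : K ⊆ s) {g : X → F} (hg : ContinuousOn g s) (h0 : ∀ x ∉ K, g x = 0) :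
    IntegrableOn g s μ :=
  ((hg.mono hKs).integrableOn_compact hK).of_forall_sdiff_eq_zero hs fun x hx ↦ h0 x hx.2

theorem hasCompactSupport_of_tsupport_subset_ball {X F : Type*} [PseudoMetricSpace X]
    [ProperSpace X] [Zero F] {f : X → F} {x : X} {r : ℝ} (h : tsupport f ⊆ ball x r) :
    HasCompactSupport f :=
  (isCompact_closedBall x r).of_isClosed_subset (isClosed_tsupport f)
    (h.trans ball_subset_closedBall)

theorem continuousOn_one_sub_norm_rpow {E : Type*} [SeminormedAddCommGroup E] (q : ℝ) :
    ContinuousOn (fun z : E ↦ (1 - ‖z‖) ^ q) (ball 0 1) :=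
  ContinuousOn.rpow_const (by fun_prop) fun z hz ↦
    .inl (sub_pos.2 (mem_ball_zero_iff.1 hz)).ne'

end CompactSupport

section HardyMass

variable {E : Type*} [NormedAddCommGroup E] {p : ℝ} {u : E → ℝ}

/-- The density `d ^ (1 - p) |u| ^ p` with `d = 1 - ‖z‖`, which is of lower order than the Hardy
term `d ^ (-p) |u| ^ p` and is controlled by the curvature of the sphere. -/
noncomputable def hardyMass (p : ℝ) (u : E → ℝ) (z : E) : ℝ := (1 - ‖z‖) ^ (1 - p) * |u z| ^ p

theorem hardyMass_nonneg {z : E} (hz : ‖z‖ < 1) : 0 ≤ hardyMass p u z :=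
  mul_nonneg (Real.rpow_nonneg (sub_pos.2 hz).le _) (Real.rpow_nonneg (abs_nonneg _) _)

theorem hardyMass_eq_zero (hp : p ≠ 0) {z : E} (hz : z ∉ tsupport u) : hardyMass p u z = 0 := by
  simp [hardyMass, image_eq_zero_of_notMem_tsupport hz, Real.zero_rpow hp]

theorem tsupport_hardyMass_subset (hp : p ≠ 0) : tsupport (hardyMass p u) ⊆ tsupport u :=
  closure_minimal (fun _ hz ↦ not_imp_comm.1 (hardyMass_eq_zero hp) hz) (isClosed_tsupport u)

theorem continuousOn_hardyMass (hp : 0 ≤ p) (hu : Continuous u) :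
    ContinuousOn (hardyMass p u) (ball 0 1) :=
  (continuousOn_one_sub_norm_rpow _).mul
    (hu.abs.rpow_const fun _ ↦ .inr hp).continuousOn

end HardyMass

section Energy

variable {E : Type*} [NormedAddCommGroup E] [InnerProductSpace ℝ E] {p : ℝ} {u : E → ℝ}

theorem continuous_gradient [CompleteSpace E] (hu : ContDiff ℝ 1 u) : Continuous (∇ u) :=
  (InnerProductSpace.toDual ℝ E).symm.continuous.comp (hu.continuous_fderiv one_ne_zero)

theorem norm_gradient [CompleteSpace E] (u : E → ℝ) (z : E) : ‖∇ u z‖ = ‖fderiv ℝ u z‖ :=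
  LinearIsometryEquiv.norm_map _ _

theorem hasFDerivAt_hardyMass (hp : 1 < p) {z : E} (hz0 : z ≠ 0) (hz : ‖z‖ < 1)
    (hu : DifferentiableAt ℝ u z) :
    HasFDerivAt (hardyMass p u)
      (((1 - ‖z‖) ^ (1 - p) * (p * |u z| ^ (p - 2) * u z)) • fderiv ℝ u z
        + ((p - 1) * ((1 - ‖z‖) ^ (-p) * |u z| ^ p)) • fderiv ℝ (‖·‖) z) z := by
  have hd := ((differentiableAt_id.norm ℝ hz0).hasFDerivAt.const_sub 1).rpow_const (p := 1 - p)
    (.inl (sub_pos.2 hz).ne')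
  refine (hd.mul ((hasDerivAt_abs_rpow (u z) hp).comp_hasFDerivAt z hu.hasFDerivAt)).congr_fderiv ?_
  rw [show 1 - p - 1 = -p by ring]
  ext y
  simp only [id, add_apply, smul_apply, neg_apply, smul_eq_mul, Function.comp_apply]
  ring

theorem differentiableAt_hardyMass (hp : 1 < p) (hu : Differentiable ℝ u)
    (hsupp : tsupport u ⊆ ball 0 1) {z : E} (hz0 : z ≠ 0) :
    DifferentiableAt ℝ (hardyMass p u) z := by
  by_cases hz : z ∈ tsupport u
  · exact (hasFDerivAt_hardyMass hp hz0 (mem_ball_zero_iff.1 (hsupp hz)) (hu z)).differentiableAt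
  · refine (differentiableAt_const (0 : ℝ)).congr_of_eventuallyEq ?_
    filter_upwards [(isClosed_tsupport u).isOpen_compl.mem_nhds hz] with y hy
    exact hardyMass_eq_zero (by linarith) hy

theorem fderiv_hardyMass_apply_self [CompleteSpace E] (hp : 1 < p) {z : E} (hz : ‖z‖ < 1)
    (hu : DifferentiableAt ℝ u z) :
    fderiv ℝ (hardyMass p u) z z =
      (1 - ‖z‖) ^ (1 - p) * (p * |u z| ^ (p - 2) * u z * inner ℝ z (∇ u z))
        + (p - 1) * (‖z‖ * (1 - ‖z‖) ^ (-p) * |u z| ^ p) := by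
  rcases eq_or_ne z 0 with rfl | hz0
  · simp
  rw [(hasFDerivAt_hardyMass hp hz0 hz hu).fderiv, real_inner_comm, inner_gradient_left]
  simp only [add_apply, smul_apply, smul_eq_mul, (differentiableAt_id.norm ℝ hz0).fderiv_norm_self]
  ring

theorem norm_mul_norm_fderiv_hardyMass_le (hp : 1 < p) {z : E} (hz : ‖z‖ < 1)
    (hu : DifferentiableAt ℝ u z) :
    ‖z‖ * ‖fderiv ℝ (hardyMass p u) z‖ ≤
      ‖z‖ * ((1 - ‖z‖) ^ (1 - p) * (p * |u z| ^ (p - 2) * |u z|) * ‖fderiv ℝ u z‖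
        + (p - 1) * ((1 - ‖z‖) ^ (-p) * |u z| ^ p)) := by
  rcases eq_or_ne z 0 with rfl | hz0
  · simp
  have hnorm : ‖fderiv ℝ (‖·‖) z‖ ≤ 1 := by
    simpa using norm_fderiv_le_of_lipschitz ℝ (lipschitzWith_one_norm (E := E))
  have hmass : 0 ≤ (p - 1) * ((1 - ‖z‖) ^ (-p) * |u z| ^ p) :=
    mul_nonneg (by linarith) (by positivity)
  rw [(hasFDerivAt_hardyMass hp hz0 hz hu).fderiv]
  gcongr
  refine (norm_add_le _ _).trans (add_le_add (le_of_eq ?_) ?_)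
  · rw [norm_smul, norm_mul, norm_mul, norm_mul, Real.norm_of_nonneg (by linarith : 0 ≤ p),
      Real.norm_of_nonneg (by positivity : 0 ≤ (1 - ‖z‖) ^ (1 - p)),
      Real.norm_of_nonneg (by positivity : 0 ≤ |u z| ^ (p - 2)), Real.norm_eq_abs]
  · rw [norm_smul, Real.norm_of_nonneg hmass]
    exact mul_le_of_le_one_right hmass hnorm

variable [FiniteDimensional ℝ E] [MeasurableSpace E] [BorelSpace E]

theorem integrableOn_ball_of_notMem_tsupport {F : Type*} [NormedAddCommGroup F] {g : E → F}
    (hsupp : tsupport u ⊆ ball 0 1) (hg : ContinuousOn g (ball 0 1))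
    (h0 : ∀ z ∉ tsupport u, g z = 0) : IntegrableOn g (ball 0 1) :=
  integrableOn_of_eq_zero_off_compact measurableSet_ball
    (hasCompactSupport_of_tsupport_subset_ball hsupp) hsupp hg h0

theorem integrableOn_hardyMass (hp : 0 < p) (hu : Continuous u) (hsupp : tsupport u ⊆ ball 0 1) :
    IntegrableOn (hardyMass p u) (ball 0 1) :=
  integrableOn_ball_of_notMem_tsupport hsupp (continuousOn_hardyMass hp.le hu)
    fun _ ↦ hardyMass_eq_zero hp.ne'

theorem integrableOn_norm_mul_rpow (hp : 0 < p) (hu : Continuous u)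
    (hsupp : tsupport u ⊆ ball 0 1) :
    IntegrableOn (fun z : E ↦ ‖z‖ * (1 - ‖z‖) ^ (-p) * |u z| ^ p) (ball 0 1) :=
  integrableOn_ball_of_notMem_tsupport hsupp
    ((continuous_norm.continuousOn.mul (continuousOn_one_sub_norm_rpow _)).mul
      (hu.abs.rpow_const fun _ ↦ .inr hp.le).continuousOn)
    fun z hz ↦ by simp [image_eq_zero_of_notMem_tsupport hz, Real.zero_rpow hp.ne']

theorem integrableOn_rpow_mul_inner_gradient (hp : 2 ≤ p) (hu : ContDiff ℝ 1 u)
    (hsupp : tsupport u ⊆ ball 0 1) :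
    IntegrableOn (fun z : E ↦ (1 - ‖z‖) ^ (1 - p) * (p * |u z| ^ (p - 2) * u z * inner ℝ z (∇ u z)))
      (ball 0 1) := by
  have hpow : Continuous fun z ↦ |u z| ^ (p - 2) :=
    hu.continuous.abs.rpow_const fun _ ↦ .inr (by linarith)
  refine integrableOn_ball_of_notMem_tsupport hsupp
    ((continuousOn_one_sub_norm_rpow _).mul (Continuous.continuousOn ?_))
    fun z hz ↦ by simp [image_eq_zero_of_notMem_tsupport hz]
  exact ((continuous_const.mul hpow).mul hu.continuous).mul
    (continuous_id.inner (continuous_gradient hu))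

theorem integrableOn_norm_gradient_rpow (hp : 0 < p) (hu : ContDiff ℝ 1 u)
    (hsupp : tsupport u ⊆ ball 0 1) : IntegrableOn (fun z : E ↦ ‖∇ u z‖ ^ p) (ball 0 1) :=
  integrableOn_ball_of_notMem_tsupport hsupp
    ((continuous_gradient hu).norm.rpow_const fun _ ↦ .inr hp.le).continuousOn fun z hz ↦ by
      simp [norm_gradient, fderiv_of_notMem_tsupport ℝ hz, Real.zero_rpow hp.ne']

theorem integrable_norm_mul_fderiv_hardyMass (hp : 2 ≤ p) (hu : ContDiff ℝ 1 u)
    (hsupp : tsupport u ⊆ ball 0 1) :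
    Integrable fun z : E ↦ ‖z‖ * ‖fderiv ℝ (hardyMass p u) z‖ := by
  have hp0 : p ≠ 0 := by linarith
  have hzero : ∀ z ∉ ball (0 : E) 1, ‖z‖ * ‖fderiv ℝ (hardyMass p u) z‖ = 0 := fun z hz ↦ by
    rw [fderiv_of_notMem_tsupport ℝ fun h ↦ hz (hsupp (tsupport_hardyMass_subset hp0 h)),
      norm_zero, mul_zero]
  refine (integrableOn_iff_integrable_of_support_subset fun z hz ↦ not_imp_comm.1 (hzero z) hz).1 ?_
  have hpow : ∀ {q : ℝ}, 0 ≤ q → Continuous fun z ↦ |u z| ^ q := fun hq ↦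
    hu.continuous.abs.rpow_const fun _ ↦ .inr hq
  have bound : IntegrableOn (fun z : E ↦ ‖z‖ * ((1 - ‖z‖) ^ (1 - p) *
      (p * |u z| ^ (p - 2) * |u z|) * ‖fderiv ℝ u z‖ + (p - 1) * ((1 - ‖z‖) ^ (-p) * |u z| ^ p)))
      (ball 0 1) := by
    refine integrableOn_ball_of_notMem_tsupport hsupp
      (continuous_norm.continuousOn.mul (ContinuousOn.add (ContinuousOn.mul ?_ ?_) ?_))
      fun z hz ↦ by simp [image_eq_zero_of_notMem_tsupport hz, Real.zero_rpow hp0]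
    · exact (continuousOn_one_sub_norm_rpow _).mul
        ((continuous_const.mul (hpow (by linarith))).mul hu.continuous.abs).continuousOn
    · exact (hu.continuous_fderiv one_ne_zero).norm.continuousOn
    · exact continuousOn_const.mul
        ((continuousOn_one_sub_norm_rpow _).mul (hpow (by linarith)).continuousOn)
  refine bound.mono' (measurable_norm.mul (measurable_fderiv ℝ _).norm).aestronglyMeasurable
    ((ae_restrict_iff' measurableSet_ball).2 (.of_forall fun z hz ↦ ?_))
  rw [Real.norm_of_nonneg (by positivity)]
  exact norm_mul_norm_fderiv_hardyMass_le (by linarith) (mem_ball_zero_iff.1 hz)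
    (hu.differentiable one_ne_zero z)

theorem integral_rpow_mul_inner_gradient (hp : 2 ≤ p) (hu : ContDiff ℝ 1 u)
    (hsupp : tsupport u ⊆ ball 0 1) :
    ∫ z in ball 0 1, (1 - ‖z‖) ^ (1 - p) * (p * |u z| ^ (p - 2) * u z * inner ℝ z (∇ u z)) =
      -(finrank ℝ E * ∫ z in ball 0 1, hardyMass p u z)
        - (p - 1) * ∫ z in ball 0 1, ‖z‖ * (1 - ‖z‖) ^ (-p) * |u z| ^ p := by
  have hp0 : 0 < p := by linarith
  have hp1 : 1 < p := by linarith
  have hsupp' := (tsupport_hardyMass_subset hp0.ne').trans hsupp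
  have euler := integral_fderiv_apply_self (μ := volume)
    ((continuousOn_hardyMass hp0.le hu.continuous).continuous_of_tsupport_subset isOpen_ball hsupp')
    (hasCompactSupport_of_tsupport_subset_ball hsupp')
    (fun z hz ↦ differentiableAt_hardyMass hp1 (hu.differentiable one_ne_zero) hsupp hz)
    (integrable_norm_mul_fderiv_hardyMass hp hu hsupp)
  rw [← setIntegral_eq_integral_of_forall_compl_eq_zero (s := ball 0 1) fun z hz ↦
      hardyMass_eq_zero hp0.ne' fun h ↦ hz (hsupp h),
    ← setIntegral_eq_integral_of_forall_compl_eq_zero (s := ball 0 1) fun z hz ↦ by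
      rw [fderiv_of_notMem_tsupport ℝ fun h ↦ hz (hsupp' h), zero_apply],
    setIntegral_congr_fun measurableSet_ball fun z hz ↦ fderiv_hardyMass_apply_self hp1
      (mem_ball_zero_iff.1 hz) (hu.differentiable one_ne_zero z),
    integral_add (integrableOn_rpow_mul_inner_gradient hp hu hsupp)
      ((integrableOn_norm_mul_rpow hp0 hu.continuous hsupp).const_mul _),
    integral_const_mul] at euler
  linarith

/-- The difference of the two sides of Hardy's inequality on the ball of radius `R`. -/
noncomputable def hardyDifference (p R : ℝ) (u : E → ℝ) : ℝ :=
  (∫ z in ball (0 : E) R, ‖fderiv ℝ u z‖ ^ p)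
    - ((p - 1) / p) ^ p * ∫ z in ball (0 : E) R, |u z| ^ p / (R - ‖z‖) ^ p

theorem setIntegral_abs_rpow_div (hp : 0 < p) (hu : Continuous u)
    (hsupp : tsupport u ⊆ ball 0 1) :
    ∫ z in ball (0 : E) 1, |u z| ^ p / (1 - ‖z‖) ^ p =
      (∫ z in ball 0 1, hardyMass p u z)
        + ∫ z in ball 0 1, ‖z‖ * (1 - ‖z‖) ^ (-p) * |u z| ^ p := by
  rw [← integral_add (integrableOn_hardyMass hp hu hsupp) (integrableOn_norm_mul_rpow hp hu hsupp)]
  refine setIntegral_congr_fun measurableSet_ball fun z hz ↦ ?_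
  have hd : 0 < 1 - ‖z‖ := sub_pos.2 (mem_ball_zero_iff.1 hz)
  simp only [hardyMass]
  rw [sub_eq_add_neg 1 p, Real.rpow_add hd, Real.rpow_one, Real.rpow_neg hd.le]
  ring

theorem integrableOn_hardyRemainder (hp : 2 ≤ p) (hu : ContDiff ℝ 1 u)
    (hsupp : tsupport u ⊆ ball 0 1) :
    IntegrableOn (fun z ↦ hardyRemainder p (u z) (∇ u z) z) (ball 0 1) :=
  have hp0 : 0 < p := by linarith
  ((integrableOn_norm_gradient_rpow hp0 hu hsupp).add
    ((integrableOn_rpow_mul_inner_gradient hp hu hsupp).const_mul _)).add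
    ((integrableOn_norm_mul_rpow hp0 hu.continuous hsupp).const_mul _)

theorem setIntegral_hardyRemainder (hp : 2 ≤ p) (hu : ContDiff ℝ 1 u)
    (hsupp : tsupport u ⊆ ball 0 1) :
    ∫ z in ball 0 1, hardyRemainder p (u z) (∇ u z) z =
      (∫ z in ball 0 1, ‖∇ u z‖ ^ p)
        + hardyExponent p ^ (p - 1) * (∫ z in ball 0 1,
          (1 - ‖z‖) ^ (1 - p) * (p * |u z| ^ (p - 2) * u z * inner ℝ z (∇ u z)))
        + (p - 1) * hardyExponent p ^ p *
          ∫ z in ball 0 1, ‖z‖ * (1 - ‖z‖) ^ (-p) * |u z| ^ p := by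
  have hp0 : 0 < p := by linarith
  have hgrad := integrableOn_norm_gradient_rpow hp0 hu hsupp
  have hinner := (integrableOn_rpow_mul_inner_gradient hp hu hsupp).const_mul
    (hardyExponent p ^ (p - 1))
  have hmass := (integrableOn_norm_mul_rpow hp0 hu.continuous hsupp).const_mul
    ((p - 1) * hardyExponent p ^ p)
  have hsum : IntegrableOn (fun z : E ↦ ‖∇ u z‖ ^ p + hardyExponent p ^ (p - 1) *
      ((1 - ‖z‖) ^ (1 - p) * (p * |u z| ^ (p - 2) * u z * inner ℝ z (∇ u z)))) (ball 0 1) :=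
    hgrad.add hinner
  simp only [hardyRemainder]
  rw [integral_add hsum hmass, integral_add hgrad hinner, integral_const_mul,
    integral_const_mul]

theorem hardyDifference_one_eq (hp : 2 ≤ p) (hu : ContDiff ℝ 1 u)
    (hsupp : tsupport u ⊆ ball 0 1) :
    hardyDifference p 1 u =
      (∫ z in ball 0 1, hardyRemainder p (u z) (∇ u z) z)
        + hardyExponent p ^ (p - 1) * (finrank ℝ E - hardyExponent p) *
          ∫ z in ball 0 1, hardyMass p u z := by
  have hp0 : 0 < p := by linarith
  have hα := hardyExponent_pos (by linarith : 1 < p)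
  have hαp : hardyExponent p ^ p = hardyExponent p ^ (p - 1) * hardyExponent p := by
    rw [← Real.rpow_add_one hα.ne', sub_add_cancel]
  rw [hardyDifference, setIntegral_abs_rpow_div hp0 hu.continuous hsupp,
    setIntegral_hardyRemainder hp hu hsupp, integral_rpow_mul_inner_gradient hp hu hsupp,
    ← hardyExponent]
  simp only [norm_gradient, hαp]
  linear_combination hardyExponent p ^ (p - 1) *
    (∫ z in ball (0 : E) 1, ‖z‖ * (1 - ‖z‖) ^ (-p) * |u z| ^ p) *
      sub_one_mul_one_sub_hardyExponent hp0.ne'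

end Energy

section PowerIntegrals

theorem lintegral_Ioc_rpow_neg {r δ : ℝ} (hr : r < 1) (hδ : 0 < δ) :
    ∫⁻ t in Ioc 0 δ, ENNReal.ofReal (t ^ (-r)) = ENNReal.ofReal (δ ^ (1 - r) / (1 - r)) := by
  have hint : IntegrableOn (fun t : ℝ ↦ t ^ (-r)) (Ioc 0 δ) :=
    (intervalIntegral.intervalIntegrable_rpow' (by linarith)).1
  rw [← ofReal_integral_eq_lintegral_ofReal hint (ae_restrict_of_forall_mem measurableSet_Ioc
      fun t ht ↦ Real.rpow_nonneg ht.1.le _), ← intervalIntegral.integral_of_le hδ.le,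
    integral_rpow (.inl (by linarith)), neg_add_eq_sub, Real.zero_rpow (by linarith), sub_zero]

theorem lintegral_Ioi_rpow_neg {r δ : ℝ} (hr : 1 < r) (hδ : 0 < δ) :
    ∫⁻ t in Ioi δ, ENNReal.ofReal (t ^ (-r)) = ENNReal.ofReal (δ ^ (1 - r) / (r - 1)) := by
  rw [← ofReal_integral_eq_lintegral_ofReal (integrableOn_Ioi_rpow_of_lt (by linarith) hδ)
      (ae_restrict_of_forall_mem measurableSet_Ioi fun t ht ↦ Real.rpow_nonneg (hδ.trans ht).le _),
    integral_Ioi_rpow_of_lt (by linarith) hδ, neg_add_eq_sub, neg_div, ← div_neg, neg_sub]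

theorem lintegral_max_rpow_neg_mul_rpow_neg {a r δ : ℝ} (hr : r < 1) (har : 1 < a + r)
    (hδ : 0 < δ) :
    ∫⁻ t in Ioi 0, ENNReal.ofReal (max δ t ^ (-a)) * ENNReal.ofReal (t ^ (-r)) =
      ENNReal.ofReal ((1 / (1 - r) + 1 / (a + r - 1)) * δ ^ (1 - a - r)) := by
  have near : ∫⁻ t in Ioc 0 δ, ENNReal.ofReal (max δ t ^ (-a)) * ENNReal.ofReal (t ^ (-r)) =
      ENNReal.ofReal (1 / (1 - r) * δ ^ (1 - a - r)) := by
    rw [setLIntegral_congr_fun measurableSet_Ioc fun t ht ↦ by rw [max_eq_left ht.2],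
      lintegral_const_mul' _ _ ENNReal.ofReal_ne_top, lintegral_Ioc_rpow_neg hr hδ,
      ← ENNReal.ofReal_mul (by positivity), mul_div_assoc', ← Real.rpow_add hδ]
    ring_nf
  have far : ∫⁻ t in Ioi δ, ENNReal.ofReal (max δ t ^ (-a)) * ENNReal.ofReal (t ^ (-r)) =
      ENNReal.ofReal (1 / (a + r - 1) * δ ^ (1 - a - r)) := by
    rw [setLIntegral_congr_fun (g := fun t ↦ ENNReal.ofReal (t ^ (-(a + r)))) measurableSet_Ioi
      fun t ht ↦ ?_, lintegral_Ioi_rpow_neg har hδ]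
    · ring_nf
    · have ht0 : 0 < t := hδ.trans ht
      simp only
      rw [max_eq_right (le_of_lt ht), ← ENNReal.ofReal_mul (by positivity), ← Real.rpow_add ht0,
        neg_add]
  rw [← Ioc_union_Ioi_eq_Ioi hδ.le, lintegral_union measurableSet_Ioi
    (disjoint_left.2 fun t ht ht' ↦ not_lt_of_ge ht.2 ht'), near, far,
    ← ENNReal.ofReal_add (by positivity) (by positivity), ← add_mul]

theorem setLIntegral_Ioc_max_rpow_neg_mul_rpow_neg_le {a r δ c : ℝ} (hc : 0 ≤ c) (hr : r < 1)
    (har : 1 < a + r) (hδ : 0 < δ) :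
    ∫⁻ t in Ioc 0 1, ENNReal.ofReal (c * max δ t ^ (-a)) * ENNReal.ofReal (t ^ (-r)) ≤
      ENNReal.ofReal (c * (1 / (1 - r) + 1 / (a + r - 1)) * δ ^ (1 - a - r)) :=
  calc ∫⁻ t in Ioc 0 1, ENNReal.ofReal (c * max δ t ^ (-a)) * ENNReal.ofReal (t ^ (-r))
      ≤ ∫⁻ t in Ioi 0, ENNReal.ofReal (c * max δ t ^ (-a)) * ENNReal.ofReal (t ^ (-r)) :=
        lintegral_mono_set Ioc_subset_Ioi_self
    _ = ENNReal.ofReal (c * (1 / (1 - r) + 1 / (a + r - 1)) * δ ^ (1 - a - r)) := by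
        simp only [ENNReal.ofReal_mul hc, mul_assoc]
        rw [lintegral_const_mul' _ _ ENNReal.ofReal_ne_top,
          lintegral_max_rpow_neg_mul_rpow_neg hr har hδ]

end PowerIntegrals

section LowerIntegral

variable {X : Type*} [MeasurableSpace X] {μ : Measure X}

theorem laverage_le_rpow_laverage_rpow {p : ℝ}
    (hp : 1 ≤ p) {f : X → ℝ≥0∞} (hf : AEMeasurable f μ) :
    ⨍⁻ x, f x ∂μ ≤ (⨍⁻ x, f x ^ p ∂μ) ^ (1 / p) := by
  have hmass : ((μ univ)⁻¹ • μ) univ ≤ 1 := ENNReal.inv_mul_le_one _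
  have hpow : ((μ univ)⁻¹ • μ) univ ^ (1 - 1 / p) ≤ 1 :=
    ENNReal.rpow_le_one hmass (by rw [sub_nonneg, div_le_one (by linarith)]; exact hp)
  have := eLpNorm'_le_eLpNorm'_mul_rpow_measure_univ one_pos hp
    (hf.smul_measure (μ univ)⁻¹).aestronglyMeasurable
  simp only [eLpNorm', enorm_eq_self, ENNReal.rpow_one, div_one] at this
  exact this.trans (mul_le_of_le_one_right' hpow)

theorem le_laverage_add_laverage [IsFiniteMeasure μ]
    [NeZero μ] {f g : X → ℝ≥0∞} {c : ℝ≥0∞} (hf : AEMeasurable f μ) (hc : ∀ x, c ≤ f x + g x) :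
    c ≤ ⨍⁻ x, f x ∂μ + ⨍⁻ x, g x ∂μ := by
  calc c = ⨍⁻ _, c ∂μ := (laverage_const μ c).symm
    _ ≤ ⨍⁻ x, (f x + g x) ∂μ := lintegral_mono hc
    _ = _ := lintegral_add_left' (hf.smul_measure _) g

theorem setLAverage_le_mul_setLAverage_add
    {s : Set X} (hs : MeasurableSet s) {f g : X → ℝ≥0∞} {a b : ℝ≥0∞} (ha : a ≠ ∞)
    (h : ∀ x ∈ s, f x ≤ a * (g x + b)) :
    ⨍⁻ x in s, f x ∂μ ≤ a * (⨍⁻ x in s, g x ∂μ + b) :=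
  calc ⨍⁻ x in s, f x ∂μ = (μ s)⁻¹ * ∫⁻ x in s, f x ∂μ := by
        rw [setLAverage_eq, ENNReal.div_eq_inv_mul]
    _ ≤ (μ s)⁻¹ * ∫⁻ x in s, a * (g x + b) ∂μ := by
        gcongr (μ s)⁻¹ * ?_
        exact setLIntegral_mono' hs h
    _ = a * ((μ s)⁻¹ * ∫⁻ x in s, g x ∂μ + b * ((μ s)⁻¹ * μ s)) := by
        rw [lintegral_const_mul' _ _ ha, lintegral_add_right _ measurable_const, setLIntegral_const]
        ring
    _ ≤ a * (⨍⁻ x in s, g x ∂μ + b) := by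
        rw [setLAverage_eq, ENNReal.div_eq_inv_mul]
        gcongr
        exact mul_le_of_le_one_right' (ENNReal.inv_mul_le_one _)

theorem laverage_lintegral_swap {Y : Type*} [MeasurableSpace Y] {ν : Measure Y} [SFinite μ]
    [SFinite ν] {f : X → Y → ℝ≥0∞}
    (hf : AEMeasurable (Function.uncurry f) (μ.prod ν)) :
    ⨍⁻ x, ∫⁻ y, f x y ∂ν ∂μ = ∫⁻ y, ⨍⁻ x, f x y ∂μ ∂ν :=
  lintegral_lintegral_swap <| hf.mono_ac <| Measure.smul_absolutelyContinuous.prod .rfl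

theorem setLIntegral_enorm_rpow_le_ofReal {F : Type*} [NormedAddCommGroup F] {s : Set X}
    (hs : MeasurableSet s) {p : ℝ} (hp : 0 ≤ p) {g : X → F} {f : X → ℝ}
    (hf : IntegrableOn f s μ) (h : ∀ x ∈ s, ‖g x‖ ^ p ≤ f x) :
    ∫⁻ x in s, ‖g x‖ₑ ^ p ∂μ ≤ ENNReal.ofReal (∫ x in s, f x ∂μ) := by
  rw [ofReal_integral_eq_lintegral_ofReal hf (ae_restrict_of_forall_mem hs fun x hx ↦
    (Real.rpow_nonneg (norm_nonneg _) p).trans (h x hx))]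
  refine setLIntegral_mono' hs fun x hx ↦ ?_
  rw [← ofReal_norm, ENNReal.ofReal_rpow_of_nonneg (norm_nonneg _) hp]
  exact ENNReal.ofReal_le_ofReal (h x hx)

end LowerIntegral

section Morrey

variable {E F : Type*} [NormedAddCommGroup E] [NormedSpace ℝ E] [NormedAddCommGroup F]
  [NormedSpace ℝ F]

theorem enorm_sub_le_lintegral_enorm_fderiv_segment {f : E → F} {T : Set E} (hT : IsOpen T)
    (hTc : Convex ℝ T) (hf : ContDiffOn ℝ 1 f T) {x z : E} (hx : x ∈ T) (hz : z ∈ T) :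
    ‖f x - f z‖ₑ ≤ ∫⁻ t in Icc (0 : ℝ) 1, ‖z - x‖ₑ * ‖fderiv ℝ f (x + t • (z - x))‖ₑ := by
  have maps : MapsTo (fun t : ℝ ↦ x + t • (z - x)) (Icc 0 1) T := fun t ht ↦
    hTc.add_smul_sub_mem hx hz ht
  have hderiv : ∀ t ∈ Icc (0 : ℝ) 1, deriv (fun t ↦ f (x + t • (z - x))) t =
      fderiv ℝ f (x + t • (z - x)) (z - x) := fun t ht ↦ by
    have hline : HasDerivAt (fun t : ℝ ↦ x + t • (z - x)) (z - x) t := by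
      simpa using ((hasDerivAt_id t).smul_const (z - x)).const_add x
    have hdiff := (hf.contDiffAt (hT.mem_nhds (maps ht))).differentiableAt one_ne_zero
    exact (hdiff.hasFDerivAt.comp_hasDerivAt t hline).deriv
  have ftc := enorm_sub_le_lintegral_deriv_of_contDiffOn_Icc
    (hf.comp (by fun_prop : ContDiffOn ℝ 1 (fun t : ℝ ↦ x + t • (z - x)) (Icc 0 1)) maps)
    zero_le_one
  simp only [Function.comp_def, one_smul, zero_smul, add_zero, add_sub_cancel] at ftc
  rw [← edist_eq_enorm_sub, edist_comm, edist_eq_enorm_sub]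
  refine ftc.trans (setLIntegral_mono' measurableSet_Icc fun t ht ↦ ?_)
  rw [hderiv t ht, mul_comm]
  exact ContinuousLinearMap.le_opENorm _ _

variable [MeasurableSpace E] [BorelSpace E] [FiniteDimensional ℝ E] {μ : Measure E}
  [μ.IsAddHaarMeasure]

theorem lintegral_comp_homothety (h : E → ℝ≥0∞) (x : E) {t : ℝ} (ht : 0 < t) :
    ∫⁻ z, h (x + t • (z - x)) ∂μ =
      ENNReal.ofReal (t ^ (-(finrank ℝ E : ℝ))) * ∫⁻ z, h z ∂μ := by
  have translate : ∀ z, x + t • (z - x) = t • z + (x - t • x) := fun z ↦ by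
    rw [smul_sub]
    abel
  simp only [translate]
  rw [← (measurableEmbedding_const_smul₀ ht.ne').lintegral_map
      (fun z ↦ h (z + (x - t • x))), Measure.map_addHaar_smul μ ht.ne', lintegral_smul_measure,
    lintegral_add_right_eq_self h, smul_eq_mul, abs_of_pos (by positivity), Real.rpow_neg ht.le,
    Real.rpow_natCast]

theorem setLIntegral_comp_homothety_le {S T : Set E} (hS : MeasurableSet S) (hT : MeasurableSet T)
    {x : E} {t : ℝ} (ht : 0 < t) (hST : ∀ z ∈ S, x + t • (z - x) ∈ T) (h : E → ℝ≥0∞) :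
    ∫⁻ z in S, h (x + t • (z - x)) ∂μ ≤
      ENNReal.ofReal (t ^ (-(finrank ℝ E : ℝ))) * ∫⁻ z in T, h z ∂μ := by
  rw [← lintegral_indicator hT, ← lintegral_comp_homothety _ x ht, ← lintegral_indicator hS]
  refine lintegral_mono <| indicator_le fun z hz ↦ ?_
  rw [indicator_of_mem (hST z hz)]

theorem setLAverage_comp_homothety_le {p : ℝ} (hp : 1 ≤ p) {S T : Set E} (hS : MeasurableSet S)
    (hT : MeasurableSet T) {x : E} {t : ℝ} (ht : 0 < t) (hST : ∀ z ∈ S, x + t • (z - x) ∈ T)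
    {g h : E → ℝ≥0∞} (hg : AEMeasurable (fun z ↦ g (x + t • (z - x))) (μ.restrict S)) {c : ℝ}
    (hgh : ∀ z ∈ S, g (x + t • (z - x)) ≤ ENNReal.ofReal c * h (x + t • (z - x))) :
    ⨍⁻ z in S, g (x + t • (z - x)) ∂μ ≤
      ((μ S)⁻¹ * ∫⁻ z in T, h z ^ p ∂μ) ^ (1 / p) *
        (ENNReal.ofReal c * ENNReal.ofReal (t ^ (-(finrank ℝ E / p)))) := by
  have hp0 : 0 < p := by linarith
  have hc : ENNReal.ofReal c ^ p ≠ ∞ := ENNReal.rpow_ne_top_of_nonneg hp0.le ENNReal.ofReal_ne_top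
  have hpow : ∫⁻ z in S, g (x + t • (z - x)) ^ p ∂μ ≤ ENNReal.ofReal c ^ p *
      (ENNReal.ofReal (t ^ (-(finrank ℝ E : ℝ))) * ∫⁻ z in T, h z ^ p ∂μ) :=
    calc ∫⁻ z in S, g (x + t • (z - x)) ^ p ∂μ
        ≤ ∫⁻ z in S, ENNReal.ofReal c ^ p * h (x + t • (z - x)) ^ p ∂μ := by
          refine setLIntegral_mono' hS fun z hz ↦ ?_
          rw [← ENNReal.mul_rpow_of_nonneg _ _ hp0.le]
          gcongr
          exact hgh z hz
      _ = ENNReal.ofReal c ^ p * ∫⁻ z in S, h (x + t • (z - x)) ^ p ∂μ :=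
          lintegral_const_mul' _ _ hc
      _ ≤ _ := by
          gcongr
          exact setLIntegral_comp_homothety_le hS hT ht hST fun z ↦ h z ^ p
  refine (laverage_le_rpow_laverage_rpow hp hg).trans ?_
  rw [setLAverage_eq, div_eq_mul_inv, mul_comm]
  calc ((μ S)⁻¹ * ∫⁻ z in S, g (x + t • (z - x)) ^ p ∂μ) ^ (1 / p)
      ≤ ((μ S)⁻¹ * (ENNReal.ofReal c ^ p *
          (ENNReal.ofReal (t ^ (-(finrank ℝ E : ℝ))) * ∫⁻ z in T, h z ^ p ∂μ))) ^ (1 / p) := by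
        gcongr
    _ = (((μ S)⁻¹ * ∫⁻ z in T, h z ^ p ∂μ) *
          (ENNReal.ofReal c ^ p * ENNReal.ofReal (t ^ (-(finrank ℝ E : ℝ))))) ^ (1 / p) := by
        ring_nf
    _ = _ := by
        have hq : 0 ≤ 1 / p := by positivity
        rw [ENNReal.mul_rpow_of_nonneg _ _ hq, ENNReal.mul_rpow_of_nonneg (_ ^ p) _ hq,
          ← ENNReal.rpow_mul, mul_one_div_cancel hp0.ne', ENNReal.rpow_one,
          ENNReal.ofReal_rpow_of_nonneg (by positivity) hq, ← Real.rpow_mul ht.le, neg_mul,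
          mul_one_div]

/- The factor `k` allows for a derivative which is singular at the boundary of `T`, at a rate
depending only on the position along the segment. -/
theorem setLAverage_enorm_sub_le {f : E → F} {p : ℝ} (hp : 1 ≤ p) {S T : Set E} (hT : IsOpen T)
    (hTc : Convex ℝ T) (hf : ContDiffOn ℝ 1 f T) (hS : MeasurableSet S) (hST : S ⊆ T) {x : E}
    (hx : x ∈ T) {L : ℝ≥0∞} (hL : ∀ z ∈ S, ‖z - x‖ₑ ≤ L) {h : E → ℝ≥0∞} {k : ℝ → ℝ}
    (hk : Measurable k) (hfk : ∀ z ∈ S, ∀ t ∈ Ioc (0 : ℝ) 1,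
      ‖fderiv ℝ f (x + t • (z - x))‖ₑ ≤ ENNReal.ofReal (k t) * h (x + t • (z - x))) :
    ⨍⁻ z in S, ‖f x - f z‖ₑ ∂μ ≤
      L * ((μ S)⁻¹ * ∫⁻ z in T, h z ^ p ∂μ) ^ (1 / p) *
        ∫⁻ t in Ioc 0 1, ENNReal.ofReal (k t) * ENNReal.ofReal (t ^ (-(finrank ℝ E / p))) := by
  have maps : ∀ z ∈ S, ∀ t ∈ Icc (0 : ℝ) 1, x + t • (z - x) ∈ T := fun z hz t ht ↦
    hTc.add_smul_sub_mem hx (hST hz) ht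
  have hcont : ContinuousOn (fun q : E × ℝ ↦ ‖fderiv ℝ f (x + q.2 • (q.1 - x))‖ₑ)
      (S ×ˢ Ioc (0 : ℝ) 1) :=
    ((hf.continuousOn_fderiv_of_isOpen hT le_rfl).comp (by fun_prop)
      fun q hq ↦ maps q.1 hq.1 q.2 (Ioc_subset_Icc_self hq.2)).enorm
  have hmeas : AEMeasurable (fun q : E × ℝ ↦ L * ‖fderiv ℝ f (x + q.2 • (q.1 - x))‖ₑ)
      ((μ.restrict S).prod (volume.restrict (Ioc (0 : ℝ) 1))) := by
    rw [Measure.prod_restrict]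
    exact (hcont.aemeasurable (hS.prod measurableSet_Ioc)).const_mul L
  have hmeas_slice : ∀ t ∈ Ioc (0 : ℝ) 1,
      AEMeasurable (fun z ↦ ‖fderiv ℝ f (x + t • (z - x))‖ₑ) (μ.restrict S) := fun t ht ↦
    ContinuousOn.aemeasurable
      (hcont.comp (f := fun z ↦ (z, t)) (by fun_prop) fun z hz ↦ ⟨hz, ht⟩) hS
  have average_le : ∀ t ∈ Ioc (0 : ℝ) 1, ⨍⁻ z in S, L * ‖fderiv ℝ f (x + t • (z - x))‖ₑ ∂μ ≤
      L * ((μ S)⁻¹ * ∫⁻ z in T, h z ^ p ∂μ) ^ (1 / p) *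
        (ENNReal.ofReal (k t) * ENNReal.ofReal (t ^ (-(finrank ℝ E / p)))) := fun t ht ↦ by
    rw [laverage_eq', lintegral_const_mul'' _ ((hmeas_slice t ht).smul_measure _), mul_assoc]
    gcongr
    exact setLAverage_comp_homothety_le (g := fun w ↦ ‖fderiv ℝ f w‖ₑ) hp hS hT.measurableSet ht.1
      (fun z hz ↦ maps z hz t (Ioc_subset_Icc_self ht)) (hmeas_slice t ht) fun z hz ↦ hfk z hz t ht
  calc ⨍⁻ z in S, ‖f x - f z‖ₑ ∂μ
      ≤ ⨍⁻ z in S, (∫⁻ t in Ioc (0 : ℝ) 1, L * ‖fderiv ℝ f (x + t • (z - x))‖ₑ) ∂μ := by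
        refine lintegral_mono_ae (Measure.ae_smul_measure ((ae_restrict_iff' hS).2
          (.of_forall fun z hz ↦ ?_)) _)
        rw [restrict_Ioc_eq_restrict_Icc]
        refine (enorm_sub_le_lintegral_enorm_fderiv_segment hT hTc hf hx (hST hz)).trans ?_
        gcongr
        exact hL z hz
    _ = ∫⁻ t in Ioc (0 : ℝ) 1, ⨍⁻ z in S, L * ‖fderiv ℝ f (x + t • (z - x))‖ₑ ∂μ :=
        laverage_lintegral_swap hmeas
    _ ≤ _ := setLIntegral_mono' measurableSet_Ioc average_le
    _ = _ := lintegral_const_mul _ (hk.ennreal_ofReal.mul (by fun_prop))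

theorem setLAverage_ball_eq (f : E → ℝ≥0∞) {r : ℝ} (hr : 0 < r) (c : E) :
    ⨍⁻ z in ball c r, f z ∂μ =
      ENNReal.ofReal (r ^ (-finrank ℝ E : ℝ)) * (μ (ball 0 1))⁻¹ * ∫⁻ z in ball c r, f z ∂μ := by
  rw [setLAverage_eq, Measure.addHaar_ball_of_pos μ c hr, ENNReal.div_eq_inv_mul,
    ENNReal.mul_inv (.inl (by positivity)) (.inl ENNReal.ofReal_ne_top),
    ← ENNReal.ofReal_inv_of_pos (by positivity), Real.rpow_neg hr.le, Real.rpow_natCast]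

theorem enorm_sub_le_of_mem_ball {f : E → F} {p : ℝ} (hp : 1 ≤ p) (hp' : finrank ℝ E < p)
    {c : E} {r : ℝ} (hf : ContDiffOn ℝ 1 f (ball c r)) {x y : E} (hx : x ∈ ball c r)
    (hy : y ∈ ball c r) :
    ‖f x - f y‖ₑ ≤ ENNReal.ofReal (4 * r / (1 - finrank ℝ E / p)) *
      (⨍⁻ z in ball c r, ‖fderiv ℝ f z‖ₑ ^ p ∂μ) ^ (1 / p) := by
  have hr : 0 < r := pos_of_mem_ball hx
  have hnp : finrank ℝ E / p < 1 := (div_lt_one (by linarith)).2 hp'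
  have : IsFiniteMeasure (μ.restrict (ball c r)) := ⟨by simpa using measure_ball_lt_top⟩
  have : NeZero (μ.restrict (ball c r)) :=
    ⟨Measure.restrict_eq_zero.not.2 (measure_ball_pos μ c hr).ne'⟩
  have average_le : ∀ w ∈ ball c r, ⨍⁻ z in ball c r, ‖f w - f z‖ₑ ∂μ ≤
      ENNReal.ofReal (2 * r / (1 - finrank ℝ E / p)) *
        (⨍⁻ z in ball c r, ‖fderiv ℝ f z‖ₑ ^ p ∂μ) ^ (1 / p) := fun w hw ↦ by
    have hdist : ∀ z ∈ ball c r, ‖z - w‖ₑ ≤ ENNReal.ofReal (2 * r) := fun z hz ↦ by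
      rw [← edist_eq_enorm_sub, edist_dist]
      gcongr
      linarith [dist_triangle_right z w c, mem_ball.1 hz, mem_ball.1 hw]
    refine (setLAverage_enorm_sub_le hp isOpen_ball (convex_ball c r) hf measurableSet_ball
      subset_rfl hw hdist (h := fun z ↦ ‖fderiv ℝ f z‖ₑ) (k := fun _ ↦ 1) measurable_const
      fun z _ t _ ↦ by simp).trans_eq ?_
    simp only [ENNReal.ofReal_one, one_mul]
    rw [lintegral_Ioc_rpow_neg hnp one_pos, Real.one_rpow, setLAverage_eq,
      ENNReal.div_eq_inv_mul, mul_right_comm, ← ENNReal.ofReal_mul (by positivity), mul_one_div]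
  have hmeas : AEMeasurable (fun z ↦ ‖f x - f z‖ₑ) (μ.restrict (ball c r)) :=
    (continuousOn_const.sub hf.continuousOn).enorm.aemeasurable measurableSet_ball
  calc ‖f x - f y‖ₑ
      ≤ ⨍⁻ z in ball c r, ‖f x - f z‖ₑ ∂μ + ⨍⁻ z in ball c r, ‖f y - f z‖ₑ ∂μ := by
        refine le_laverage_add_laverage hmeas fun z ↦ ?_
        simp only [← edist_eq_enorm_sub]
        exact edist_triangle_right _ _ _
    _ ≤ _ := add_le_add (average_le x hx) (average_le y hy)
    _ = _ := by
        have : 0 < 1 - finrank ℝ E / p := sub_pos.2 hnp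
        rw [← add_mul, ← ENNReal.ofReal_add (by positivity) (by positivity)]
        ring_nf

end Morrey

section GroundState

variable {E : Type*} [NormedAddCommGroup E] {p : ℝ} {u : E → ℝ} {z : E}

theorem one_sub_norm_le_one_sub_norm_sq (hz : ‖z‖ < 1) : 1 - ‖z‖ ≤ 1 - ‖z‖ ^ 2 := by
  nlinarith [norm_nonneg z]

theorem one_sub_norm_sq_rpow_le {q : ℝ} (hq : 0 ≤ q) (hz : ‖z‖ < 1) :
    (1 - ‖z‖ ^ 2) ^ (-q) ≤ (1 - ‖z‖) ^ (-q) :=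
  Real.rpow_le_rpow_of_nonpos (sub_pos.2 hz) (one_sub_norm_le_one_sub_norm_sq hz) (neg_nonpos.2 hq)

theorem one_sub_norm_sq_pos (hz : ‖z‖ < 1) : 0 < 1 - ‖z‖ ^ 2 :=
  (sub_pos.2 hz).trans_le (one_sub_norm_le_one_sub_norm_sq hz)

/-- The quotient of `u` by the virtual ground state `(1 - ‖z‖ ^ 2) ^ α` of Hardy's inequality on the
unit ball. It is comparable to `d ^ α`, where `d = 1 - ‖z‖`, but smooth at the origin. -/
noncomputable def groundStateQuotient (p : ℝ) (u : E → ℝ) (z : E) : ℝ :=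
  u z * (1 - ‖z‖ ^ 2) ^ (-hardyExponent p)

theorem abs_groundStateQuotient_rpow_le (hp : 1 < p) (hz : ‖z‖ < 1) :
    |groundStateQuotient p u z| ^ p ≤ hardyMass p u z := by
  have hd := one_sub_norm_sq_pos hz
  have hαp : -hardyExponent p * p = 1 - p := by
    rw [hardyExponent]
    field_simp
    ring
  calc |groundStateQuotient p u z| ^ p
      = ((1 - ‖z‖ ^ 2) ^ (-hardyExponent p * p)) * |u z| ^ p := by
        rw [groundStateQuotient, abs_mul, abs_of_nonneg (Real.rpow_nonneg hd.le _),
          Real.mul_rpow (abs_nonneg _) (Real.rpow_nonneg hd.le _), ← Real.rpow_mul hd.le, mul_comm]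
    _ ≤ hardyMass p u z := by
        rw [hαp, hardyMass, ← neg_sub p 1]
        exact mul_le_mul_of_nonneg_right (one_sub_norm_sq_rpow_le (sub_nonneg.2 hp.le) hz)
          (by positivity)

theorem enorm_le_mul_enorm_groundStateQuotient (hp : 1 < p) (hz : ‖z‖ < 1) :
    ‖u z‖ₑ ≤
      ENNReal.ofReal (2 ^ hardyExponent p * (1 - ‖z‖) ^ hardyExponent p) *
        ‖groundStateQuotient p u z‖ₑ := by
  have hd : 0 < 1 - ‖z‖ := sub_pos.2 hz
  have hd' := one_sub_norm_sq_pos hz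
  have hα := hardyExponent_pos hp
  have factor : u z = (1 - ‖z‖ ^ 2) ^ hardyExponent p * groundStateQuotient p u z := by
    rw [groundStateQuotient, Real.rpow_neg hd'.le]
    field_simp
  nth_rw 1 [factor]
  rw [enorm_mul, Real.enorm_eq_ofReal (by positivity), ← Real.mul_rpow two_pos.le hd.le]
  gcongr
  nlinarith [norm_nonneg z]

end GroundState

section TwistedGradient

variable {E : Type*} [NormedAddCommGroup E] [InnerProductSpace ℝ E] {p : ℝ} {u : E → ℝ} {z : E}

/-- The gradient of `groundStateQuotient p u` multiplied by the ground state. -/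
noncomputable def twistedGradient [CompleteSpace E] (p : ℝ) (u : E → ℝ) (z : E) : E :=
  ∇ u z + (2 * hardyExponent p * u z / (1 - ‖z‖ ^ 2)) • z

theorem contDiffOn_groundStateQuotient (hu : ContDiff ℝ 1 u) :
    ContDiffOn ℝ 1 (groundStateQuotient p u) (ball 0 1) :=
  hu.contDiffOn.mul <| ContDiffOn.rpow_const_of_ne
    (contDiff_const.sub (contDiff_norm_sq ℝ)).contDiffOn
    fun _ hz ↦ (one_sub_norm_sq_pos (mem_ball_zero_iff.1 hz)).ne'

theorem hasGradientAt_groundStateQuotient [CompleteSpace E] (hz : ‖z‖ < 1)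
    (hu : DifferentiableAt ℝ u z) :
    HasGradientAt (groundStateQuotient p u)
      ((1 - ‖z‖ ^ 2) ^ (-hardyExponent p) • twistedGradient p u z) z := by
  have hd := one_sub_norm_sq_pos hz
  have weight := ((hasStrictFDerivAt_norm_sq z).hasFDerivAt.const_sub 1).rpow_const
    (p := -hardyExponent p) (.inl hd.ne')
  refine HasFDerivAt.congr_fderiv (hu.hasFDerivAt.mul weight) ?_
  ext y
  rw [InnerProductSpace.toDual_apply_apply, twistedGradient, inner_smul_left, inner_add_left,
    inner_gradient_left, inner_smul_left, Real.rpow_sub_one hd.ne']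
  simp only [add_apply, smul_apply, neg_apply, smul_eq_mul, nsmul_eq_mul, innerSL_apply_apply,
    conj_trivial]
  push_cast
  field_simp
  ring

theorem enorm_fderiv_groundStateQuotient_le [CompleteSpace E] (hp : 1 < p) (hz : ‖z‖ < 1)
    (hu : DifferentiableAt ℝ u z) :
    ‖fderiv ℝ (groundStateQuotient p u) z‖ₑ ≤
      ENNReal.ofReal ((1 - ‖z‖) ^ (-hardyExponent p)) * ‖twistedGradient p u z‖ₑ := by
  rw [← ofReal_norm, ← norm_gradient, (hasGradientAt_groundStateQuotient hz hu).gradient,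
    ofReal_norm, enorm_smul, Real.enorm_eq_ofReal (Real.rpow_nonneg (one_sub_norm_sq_pos hz).le _)]
  exact mul_le_mul_left (ENNReal.ofReal_le_ofReal
    (one_sub_norm_sq_rpow_le (hardyExponent_pos hp).le hz)) _

theorem norm_twistedGradient_rpow_le [CompleteSpace E] (hp : 2 ≤ p) (hz : ‖z‖ < 1) :
    ‖twistedGradient p u z‖ ^ p ≤
      4 ^ p * hardyRemainder p (u z) (∇ u z) z + 2 ^ p * hardyMass p u z := by
  refine (norm_add_smul_rpow_le_hardyRemainder_add hp (u z) (∇ u z) hz).trans ?_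
  gcongr
  refine le_mul_of_one_le_left (by positivity) ?_
  exact Real.one_le_rpow_of_pos_of_le_one_of_nonpos (sub_pos.2 hz) (by linarith [norm_nonneg z])
    (by linarith)

theorem norm_gradient_le_norm_twistedGradient_add [CompleteSpace E] (hp : 1 < p) (hz : ‖z‖ < 1) :
    ‖∇ u z‖ ≤ ‖twistedGradient p u z‖ + 2 * |u z| / (1 - ‖z‖) := by
  have hd := one_sub_norm_sq_pos hz
  have correction : ‖(2 * hardyExponent p * u z / (1 - ‖z‖ ^ 2)) • z‖ ≤ 2 * |u z| / (1 - ‖z‖) :=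
    calc ‖(2 * hardyExponent p * u z / (1 - ‖z‖ ^ 2)) • z‖
        = 2 * hardyExponent p * |u z| / (1 - ‖z‖ ^ 2) * ‖z‖ := by
          rw [norm_smul, Real.norm_eq_abs, abs_div, abs_mul, abs_mul, abs_two,
            abs_of_pos (hardyExponent_pos hp), abs_of_pos hd]
      _ ≤ 2 * 1 * |u z| / (1 - ‖z‖) * 1 := by
          gcongr
          · exact (hardyExponent_lt_one (by linarith)).le
          · exact pow_le_of_le_one (norm_nonneg z) hz.le two_ne_zero
      _ = 2 * |u z| / (1 - ‖z‖) := by ring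
  calc ‖∇ u z‖ = ‖twistedGradient p u z - (2 * hardyExponent p * u z / (1 - ‖z‖ ^ 2)) • z‖ := by
        rw [twistedGradient, add_sub_cancel_right]
    _ ≤ _ := (norm_sub_le _ _).trans (by gcongr)

variable [FiniteDimensional ℝ E] [MeasurableSpace E] [BorelSpace E]

theorem setIntegral_hardyMass_nonneg : 0 ≤ ∫ z in ball (0 : E) 1, hardyMass p u z :=
  setIntegral_nonneg measurableSet_ball fun _ hz ↦ hardyMass_nonneg (mem_ball_zero_iff.1 hz)

theorem setIntegral_hardyRemainder_le (hE : 1 ≤ finrank ℝ E) (hp : 2 ≤ p) (hu : ContDiff ℝ 1 u)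
    (hsupp : tsupport u ⊆ ball 0 1) :
    ∫ z in ball 0 1, hardyRemainder p (u z) (∇ u z) z ≤ hardyDifference p 1 u := by
  have hα := hardyExponent_pos (by linarith : 1 < p)
  have hE' := natCast_sub_hardyExponent_pos (by linarith : 0 < p) hE
  have hK := setIntegral_hardyMass_nonneg (p := p) (u := u)
  rw [hardyDifference_one_eq hp hu hsupp]
  exact le_add_of_nonneg_right (by positivity)

theorem setIntegral_hardyMass_le (hE : 1 ≤ finrank ℝ E) (hp : 2 ≤ p) (hu : ContDiff ℝ 1 u)
    (hsupp : tsupport u ⊆ ball 0 1) :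
    ∫ z in ball 0 1, hardyMass p u z ≤
      hardyDifference p 1 u / (hardyExponent p ^ (p - 1) * (finrank ℝ E - hardyExponent p)) := by
  have hα := hardyExponent_pos (by linarith : 1 < p)
  have hE' := natCast_sub_hardyExponent_pos (by linarith : 0 < p) hE
  rw [le_div_iff₀' (by positivity), hardyDifference_one_eq hp hu hsupp]
  exact le_add_of_nonneg_left (setIntegral_nonneg measurableSet_ball fun z hz ↦
    hardyRemainder_nonneg hp _ _ (mem_ball_zero_iff.1 hz))

theorem hardyDifference_one_nonneg (hE : 1 ≤ finrank ℝ E) (hp : 2 ≤ p) (hu : ContDiff ℝ 1 u)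
    (hsupp : tsupport u ⊆ ball 0 1) : 0 ≤ hardyDifference p 1 u :=
  (setIntegral_nonneg measurableSet_ball fun _ hz ↦
    hardyRemainder_nonneg hp _ _ (mem_ball_zero_iff.1 hz)).trans
    (setIntegral_hardyRemainder_le hE hp hu hsupp)

theorem exists_setLIntegral_groundStateQuotient_rpow_le (hE : 1 ≤ finrank ℝ E) (hp : 2 ≤ p) :
    ∃ C : ℝ≥0∞, C ≠ ∞ ∧ ∀ u : E → ℝ, ContDiff ℝ 1 u → tsupport u ⊆ ball 0 1 →
      ∫⁻ z in ball 0 1, ‖groundStateQuotient p u z‖ₑ ^ p ≤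
        C * ENNReal.ofReal (hardyDifference p 1 u) := by
  have hα := hardyExponent_pos (by linarith : 1 < p)
  have hE' := natCast_sub_hardyExponent_pos (by linarith : 0 < p) hE
  refine ⟨ENNReal.ofReal (hardyExponent p ^ (p - 1) * (finrank ℝ E - hardyExponent p))⁻¹,
    ENNReal.ofReal_ne_top, fun u hu hsupp ↦ ?_⟩
  rw [← ENNReal.ofReal_mul (by positivity), inv_mul_eq_div]
  refine (setLIntegral_enorm_rpow_le_ofReal measurableSet_ball (by linarith)
    (integrableOn_hardyMass (by linarith) hu.continuous hsupp) fun z hz ↦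
      abs_groundStateQuotient_rpow_le (by linarith) (mem_ball_zero_iff.1 hz)).trans ?_
  exact ENNReal.ofReal_le_ofReal (setIntegral_hardyMass_le hE hp hu hsupp)

theorem exists_setLIntegral_twistedGradient_rpow_le (hE : 1 ≤ finrank ℝ E) (hp : 2 ≤ p) :
    ∃ C : ℝ≥0∞, C ≠ ∞ ∧ ∀ u : E → ℝ, ContDiff ℝ 1 u → tsupport u ⊆ ball 0 1 →
      ∫⁻ z in ball 0 1, ‖twistedGradient p u z‖ₑ ^ p ≤
        C * ENNReal.ofReal (hardyDifference p 1 u) := by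
  have hα := hardyExponent_pos (by linarith : 1 < p)
  have hE' := natCast_sub_hardyExponent_pos (by linarith : 0 < p) hE
  set a := hardyExponent p ^ (p - 1) * (finrank ℝ E - hardyExponent p)
  refine ⟨ENNReal.ofReal (4 ^ p + 2 ^ p / a), ENNReal.ofReal_ne_top, fun u hu hsupp ↦ ?_⟩
  have hrem := (integrableOn_hardyRemainder hp hu hsupp).const_mul (4 ^ p)
  have hmass := (integrableOn_hardyMass (p := p) (by linarith) hu.continuous hsupp).const_mul
    (2 ^ p)
  rw [← ENNReal.ofReal_mul (by positivity)]
  refine (setLIntegral_enorm_rpow_le_ofReal measurableSet_ball (by linarith) (hrem.add hmass)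
    fun z hz ↦ norm_twistedGradient_rpow_le hp (mem_ball_zero_iff.1 hz)).trans ?_
  refine ENNReal.ofReal_le_ofReal ?_
  simp only [Pi.add_apply]
  rw [integral_add hrem hmass, integral_const_mul, integral_const_mul]
  calc _ ≤ 4 ^ p * hardyDifference p 1 u + 2 ^ p * (hardyDifference p 1 u / a) := by
        gcongr
        exacts [setIntegral_hardyRemainder_le hE hp hu hsupp,
          setIntegral_hardyMass_le hE hp hu hsupp]
    _ = _ := by ring

end TwistedGradient

section UnitBall

theorem max_div_two_le_one_sub_norm_segment {E : Type*} [SeminormedAddCommGroup E]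
    [NormedSpace ℝ E] {x z : E} {t : ℝ} (hx : ‖x‖ ≤ 1) (hz : ‖z‖ ≤ 1 / 2) (ht : t ∈ Ioc (0 : ℝ) 1) :
    max (1 - ‖x‖) t / 2 ≤ 1 - ‖x + t • (z - x)‖ := by
  have segment : ‖x + t • (z - x)‖ ≤ (1 - t) * ‖x‖ + t * (1 / 2) :=
    calc ‖x + t • (z - x)‖ = ‖(1 - t) • x + t • z‖ := by congr 1; module
      _ ≤ ‖(1 - t) • x‖ + ‖t • z‖ := norm_add_le _ _
      _ = (1 - t) * ‖x‖ + t * ‖z‖ := by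
        rw [norm_smul_of_nonneg (sub_nonneg.2 ht.2), norm_smul_of_nonneg ht.1.le]
      _ ≤ _ := by gcongr; exact ht.1.le
  have := mul_nonneg (sub_nonneg.2 ht.2) (sub_nonneg.2 hx)
  have := mul_nonneg ht.1.le (norm_nonneg x)
  rw [div_le_iff₀ two_pos]
  apply max_le <;> linarith

variable {E : Type*} [NormedAddCommGroup E] [InnerProductSpace ℝ E] {p : ℝ} {u : E → ℝ} {x : E}

theorem enorm_fderiv_groundStateQuotient_segment_le [CompleteSpace E] (hp : 1 < p)
    (hu : Differentiable ℝ u) (hx : ‖x‖ < 1) {z : E} (hz : ‖z‖ ≤ 1 / 2) {t : ℝ}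
    (ht : t ∈ Ioc (0 : ℝ) 1) :
    ‖fderiv ℝ (groundStateQuotient p u) (x + t • (z - x))‖ₑ ≤
      ENNReal.ofReal (2 ^ hardyExponent p * max (1 - ‖x‖) t ^ (-hardyExponent p)) *
        ‖twistedGradient p u (x + t • (z - x))‖ₑ := by
  have hmax : 0 < max (1 - ‖x‖) t := lt_max_of_lt_right ht.1
  have hdist := max_div_two_le_one_sub_norm_segment hx.le hz ht
  have hball : ‖x + t • (z - x)‖ < 1 := by linarith
  refine (enorm_fderiv_groundStateQuotient_le hp hball (hu _)).trans ?_
  gcongr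
  calc (1 - ‖x + t • (z - x)‖) ^ (-hardyExponent p)
      ≤ (max (1 - ‖x‖) t / 2) ^ (-hardyExponent p) :=
        Real.rpow_le_rpow_of_nonpos (half_pos hmax) hdist (neg_nonpos.2 (hardyExponent_pos hp).le)
    _ = _ := by
        rw [Real.div_rpow hmax.le two_pos.le, Real.rpow_neg two_pos.le, div_inv_eq_mul, mul_comm]

variable [FiniteDimensional ℝ E] [MeasurableSpace E] [BorelSpace E]

theorem setLAverage_enorm_groundStateQuotient_sub_le (hp : 1 < p)
    (hnp : finrank ℝ E / p < 1) (hαnp : 1 < hardyExponent p + finrank ℝ E / p)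
    (hu : ContDiff ℝ 1 u) (hx : ‖x‖ < 1) :
    ⨍⁻ z in ball (0 : E) (1 / 2), ‖groundStateQuotient p u x - groundStateQuotient p u z‖ₑ
        ∂volume ≤
      2 * ((volume (ball (0 : E) (1 / 2)))⁻¹ *
          ∫⁻ z in ball 0 1, ‖twistedGradient p u z‖ₑ ^ p) ^ (1 / p) *
        ENNReal.ofReal (2 ^ hardyExponent p *
            (1 / (1 - finrank ℝ E / p) + 1 / (hardyExponent p + finrank ℝ E / p - 1)) *
          (1 - ‖x‖) ^ (1 - hardyExponent p - finrank ℝ E / p)) := by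
  have hball : ball (0 : E) (1 / 2) ⊆ ball 0 1 := ball_subset_ball (by norm_num)
  refine (setLAverage_enorm_sub_le (μ := volume) (L := 2) (p := p)
    (k := fun t ↦ 2 ^ hardyExponent p * max (1 - ‖x‖) t ^ (-hardyExponent p))
    (h := fun z ↦ ‖twistedGradient p u z‖ₑ) hp.le isOpen_ball (convex_ball 0 1)
    (contDiffOn_groundStateQuotient hu) measurableSet_ball hball
    (mem_ball_zero_iff.2 hx) (fun z hz ↦ ?_) (by fun_prop) (fun z hz t ht ↦
      enorm_fderiv_groundStateQuotient_segment_le hp (hu.differentiable one_ne_zero) hx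
        (mem_ball_zero_iff.1 hz).le ht)).trans ?_
  · calc ‖z - x‖ₑ ≤ ‖z‖ₑ + ‖x‖ₑ := enorm_sub_le
      _ ≤ 1 + 1 := by
        gcongr <;> rw [← ofReal_norm, ENNReal.ofReal_le_one]
        exacts [(mem_ball_zero_iff.1 (hball hz)).le, hx.le]
      _ = 2 := one_add_one_eq_two
  · gcongr
    exact setLIntegral_Ioc_max_rpow_neg_mul_rpow_neg_le (by positivity) hnp hαnp (sub_pos.2 hx)

theorem enorm_groundStateQuotient_le (hp : 1 < p)
    (hnp : finrank ℝ E / p < 1) (hαnp : 1 < hardyExponent p + finrank ℝ E / p)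
    (hu : ContDiff ℝ 1 u) (hx : ‖x‖ < 1) :
    ‖groundStateQuotient p u x‖ₑ ≤
      2 * ((volume (ball (0 : E) (1 / 2)))⁻¹ *
          ∫⁻ z in ball 0 1, ‖twistedGradient p u z‖ₑ ^ p) ^ (1 / p) *
        ENNReal.ofReal (2 ^ hardyExponent p *
            (1 / (1 - finrank ℝ E / p) + 1 / (hardyExponent p + finrank ℝ E / p - 1)) *
          (1 - ‖x‖) ^ (1 - hardyExponent p - finrank ℝ E / p)) +
      ((volume (ball (0 : E) (1 / 2)))⁻¹ *
        ∫⁻ z in ball 0 1, ‖groundStateQuotient p u z‖ₑ ^ p) ^ (1 / p) := by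
  set v := groundStateQuotient p u
  set B : Set E := ball 0 (1 / 2)
  have hball : B ⊆ ball 0 1 := ball_subset_ball (by norm_num)
  have : IsFiniteMeasure (volume.restrict B) := ⟨by simpa using measure_ball_lt_top⟩
  have : NeZero (volume.restrict B) :=
    ⟨Measure.restrict_eq_zero.not.2 (measure_ball_pos _ _ (by norm_num)).ne'⟩
  have hv : AEMeasurable v (volume.restrict B) :=
    ((contDiffOn_groundStateQuotient hu).continuousOn.mono hball).aemeasurable measurableSet_ball
  have mean : ⨍⁻ z in B, ‖v z‖ₑ ∂volume ≤
      ((volume B)⁻¹ * ∫⁻ z in ball 0 1, ‖v z‖ₑ ^ p) ^ (1 / p) := by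
    refine (laverage_le_rpow_laverage_rpow hp.le hv.enorm).trans ?_
    rw [setLAverage_eq, ENNReal.div_eq_inv_mul]
    gcongr
  calc ‖v x‖ₑ ≤ ⨍⁻ z in B, ‖v x - v z‖ₑ ∂volume + ⨍⁻ z in B, ‖v z‖ₑ ∂volume :=
        le_laverage_add_laverage (by fun_prop) fun z ↦ by simpa using enorm_add_le (v x - v z) (v z)
    _ ≤ _ := add_le_add (setLAverage_enorm_groundStateQuotient_sub_le hp hnp hαnp hu hx) mean

theorem exists_enorm_groundStateQuotient_le (hE : 2 ≤ finrank ℝ E) (hp : finrank ℝ E < p) :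
    ∃ C : ℝ≥0∞, C ≠ ∞ ∧ ∀ u : E → ℝ, ContDiff ℝ 1 u → tsupport u ⊆ ball 0 1 → ∀ x : E, ‖x‖ < 1 →
      ‖groundStateQuotient p u x‖ₑ ≤
        C * ENNReal.ofReal ((1 - ‖x‖) ^ (1 - hardyExponent p - finrank ℝ E / p)) *
          ENNReal.ofReal (hardyDifference p 1 u) ^ (1 / p) := by
  have hE' : (2 : ℝ) ≤ finrank ℝ E := by exact_mod_cast hE
  have hp0 : 0 < p := by linarith
  have hnp : finrank ℝ E / p < 1 := (div_lt_one hp0).2 hp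
  have hαnp : 1 < hardyExponent p + finrank ℝ E / p := by
    rw [hardyExponent, ← add_div, one_lt_div hp0]
    linarith
  obtain ⟨C₁, hC₁, hgrad⟩ := exists_setLIntegral_twistedGradient_rpow_le (E := E) (p := p)
    (by lia) (by linarith)
  obtain ⟨C₂, hC₂, hmass⟩ := exists_setLIntegral_groundStateQuotient_rpow_le (E := E) (p := p)
    (by lia) (by linarith)
  set m := volume (ball (0 : E) (1 / 2))
  have hm : m ≠ 0 := (measure_ball_pos _ _ (by norm_num)).ne'
  set κ := 2 ^ hardyExponent p *
    (1 / (1 - finrank ℝ E / p) + 1 / (hardyExponent p + finrank ℝ E / p - 1))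
  refine ⟨2 * (m⁻¹ * C₁) ^ (1 / p) * ENNReal.ofReal κ + (m⁻¹ * C₂) ^ (1 / p), by finiteness,
    fun u hu hsupp x hx ↦ ?_⟩
  set δ := ENNReal.ofReal ((1 - ‖x‖) ^ (1 - hardyExponent p - finrank ℝ E / p))
  set H := ENNReal.ofReal (hardyDifference p 1 u)
  have one_le_δ : 1 ≤ δ := ENNReal.one_le_ofReal.2 <|
    Real.one_le_rpow_of_pos_of_le_one_of_nonpos (sub_pos.2 hx)
      (sub_le_self _ (norm_nonneg x)) (by linarith)
  have root_le : ∀ {I C : ℝ≥0∞}, I ≤ C * H →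
      (m⁻¹ * I) ^ (1 / p) ≤ (m⁻¹ * C) ^ (1 / p) * H ^ (1 / p) := fun h ↦ by
    rw [← ENNReal.mul_rpow_of_nonneg _ _ (by positivity), mul_assoc]
    gcongr
  calc ‖groundStateQuotient p u x‖ₑ
      ≤ 2 * ((m⁻¹ * C₁) ^ (1 / p) * H ^ (1 / p)) * (ENNReal.ofReal κ * δ) +
          (m⁻¹ * C₂) ^ (1 / p) * H ^ (1 / p) * δ := by
        refine (enorm_groundStateQuotient_le (by linarith) hnp hαnp hu hx).trans ?_
        rw [ENNReal.ofReal_mul (by positivity)]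
        gcongr
        · exact root_le (hgrad u hu hsupp)
        · exact (root_le (hmass u hu hsupp)).trans (le_mul_of_one_le_right' one_le_δ)
    _ = _ := by ring

theorem exists_enorm_le_hardyDifference (hE : 2 ≤ finrank ℝ E) (hp : finrank ℝ E < p) :
    ∃ C : ℝ≥0∞, C ≠ ∞ ∧ ∀ u : E → ℝ, ContDiff ℝ 1 u → tsupport u ⊆ ball 0 1 → ∀ x : E, ‖x‖ < 1 →
      ‖u x‖ₑ ≤ C * ENNReal.ofReal ((1 - ‖x‖) ^ (1 - finrank ℝ E / p)) *
        ENNReal.ofReal (hardyDifference p 1 u) ^ (1 / p) := by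
  have hp1 : 1 < p := lt_of_le_of_lt (by exact_mod_cast one_le_two.trans hE) hp
  obtain ⟨C, hC, hquot⟩ := exists_enorm_groundStateQuotient_le hE hp
  refine ⟨ENNReal.ofReal (2 ^ hardyExponent p) * C, by finiteness, fun u hu hsupp x hx ↦ ?_⟩
  have hd : 0 < 1 - ‖x‖ := sub_pos.2 hx
  have rpow_add : (1 - ‖x‖) ^ (1 - finrank ℝ E / p) = (1 - ‖x‖) ^ hardyExponent p *
      (1 - ‖x‖) ^ (1 - hardyExponent p - finrank ℝ E / p) := by
    rw [← Real.rpow_add hd]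
    ring_nf
  refine (enorm_le_mul_enorm_groundStateQuotient hp1 hx).trans
    ((mul_le_mul_right (hquot u hu hsupp x hx) _).trans_eq ?_)
  rw [rpow_add, ENNReal.ofReal_mul (by positivity), ENNReal.ofReal_mul (by positivity)]
  ring

theorem exists_enorm_fderiv_le_enorm_twistedGradient_add (hE : 2 ≤ finrank ℝ E)
    (hp : finrank ℝ E < p) :
    ∃ C : ℝ≥0∞, C ≠ ∞ ∧ ∀ u : E → ℝ, ContDiff ℝ 1 u → tsupport u ⊆ ball 0 1 → ∀ x : E, ‖x‖ < 1 →
      ‖fderiv ℝ u x‖ₑ ≤ ‖twistedGradient p u x‖ₑ +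
        C * ENNReal.ofReal ((1 - ‖x‖) ^ (-(finrank ℝ E / p))) *
          ENNReal.ofReal (hardyDifference p 1 u) ^ (1 / p) := by
  have hp1 : 1 < p := lt_of_le_of_lt (by exact_mod_cast one_le_two.trans hE) hp
  obtain ⟨C, hC, hsup⟩ := exists_enorm_le_hardyDifference hE hp
  refine ⟨2 * C, by finiteness, fun u hu hsupp x hx ↦ ?_⟩
  have hd : 0 < 1 - ‖x‖ := sub_pos.2 hx
  have rpow_add : (1 - ‖x‖) ^ (-(finrank ℝ E / p)) =
      (1 - ‖x‖)⁻¹ * (1 - ‖x‖) ^ (1 - finrank ℝ E / p) := by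
    rw [← Real.rpow_neg_one, ← Real.rpow_add hd]
    ring_nf
  calc ‖fderiv ℝ u x‖ₑ
      ≤ ENNReal.ofReal (‖twistedGradient p u x‖ + 2 * |u x| / (1 - ‖x‖)) := by
        rw [← ofReal_norm, ← norm_gradient]
        exact ENNReal.ofReal_le_ofReal (norm_gradient_le_norm_twistedGradient_add hp1 hx)
    _ = ‖twistedGradient p u x‖ₑ + 2 * (ENNReal.ofReal (1 - ‖x‖)⁻¹ * ‖u x‖ₑ) := by
        rw [ENNReal.ofReal_add (norm_nonneg _) (by positivity), ofReal_norm, div_eq_inv_mul,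
          ENNReal.ofReal_mul (by positivity), ENNReal.ofReal_mul two_pos.le, ← Real.norm_eq_abs,
          ofReal_norm, ENNReal.ofReal_ofNat]
        ring
    _ ≤ ‖twistedGradient p u x‖ₑ + 2 * (ENNReal.ofReal (1 - ‖x‖)⁻¹ *
        (C * ENNReal.ofReal ((1 - ‖x‖) ^ (1 - finrank ℝ E / p)) *
          ENNReal.ofReal (hardyDifference p 1 u) ^ (1 / p))) := by
        gcongr
        exact hsup u hu hsupp x hx
    _ = _ := by
        rw [rpow_add, ENNReal.ofReal_mul (by positivity)]
        ring

theorem exists_enorm_fderiv_rpow_le_enorm_twistedGradient_rpow_add (hE : 2 ≤ finrank ℝ E)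
    (hp : finrank ℝ E < p) :
    ∃ C : ℝ≥0∞, C ≠ ∞ ∧ ∀ u : E → ℝ, ContDiff ℝ 1 u → tsupport u ⊆ ball 0 1 → ∀ x : E, ‖x‖ < 1 →
      ‖fderiv ℝ u x‖ₑ ^ p ≤ 2 ^ (p - 1) * (‖twistedGradient p u x‖ₑ ^ p +
        C * ENNReal.ofReal ((1 - ‖x‖) ^ (-finrank ℝ E : ℝ)) *
          ENNReal.ofReal (hardyDifference p 1 u)) := by
  have hp1 : 1 < p := lt_of_le_of_lt (by exact_mod_cast one_le_two.trans hE) hp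
  have hp0 : 0 < p := by linarith
  obtain ⟨C, hC, hfderiv⟩ := exists_enorm_fderiv_le_enorm_twistedGradient_add hE hp
  refine ⟨C ^ p, by finiteness, fun u hu hsupp x hx ↦ ?_⟩
  have hd : 0 < 1 - ‖x‖ := sub_pos.2 hx
  refine (ENNReal.rpow_le_rpow (hfderiv u hu hsupp x hx) hp0.le).trans
    ((ENNReal.rpow_add_le_mul_rpow_add_rpow _ _ hp1.le).trans_eq ?_)
  rw [ENNReal.mul_rpow_of_nonneg _ _ hp0.le, ENNReal.mul_rpow_of_nonneg _ _ hp0.le,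
    ENNReal.ofReal_rpow_of_pos (by positivity), ← Real.rpow_mul hd.le, neg_mul,
    div_mul_cancel₀ _ hp0.ne', ← ENNReal.rpow_mul, one_div_mul_cancel hp0.ne', ENNReal.rpow_one]

theorem exists_setLAverage_enorm_fderiv_rpow_le_hardyDifference (hE : 2 ≤ finrank ℝ E)
    (hp : finrank ℝ E < p) :
    ∃ C : ℝ≥0∞, C ≠ ∞ ∧ ∀ u : E → ℝ, ContDiff ℝ 1 u → tsupport u ⊆ ball 0 1 → ∀ (x : E) (r : ℝ),
      0 < r → 2 * r ≤ 1 - ‖x‖ →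
      ⨍⁻ z in ball x r, ‖fderiv ℝ u z‖ₑ ^ p ∂volume ≤
        C * ENNReal.ofReal (r ^ (-finrank ℝ E : ℝ)) * ENNReal.ofReal (hardyDifference p 1 u) := by
  have hE' : (2 : ℝ) ≤ finrank ℝ E := by exact_mod_cast hE
  obtain ⟨C₁, hC₁, hgrad⟩ := exists_setLIntegral_twistedGradient_rpow_le (E := E) (p := p)
    (by lia) (by linarith)
  obtain ⟨C₂, hC₂, hfderiv⟩ := exists_enorm_fderiv_rpow_le_enorm_twistedGradient_rpow_add hE hp
  have hm : volume (ball (0 : E) 1) ≠ 0 := (measure_ball_pos _ _ one_pos).ne'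
  refine ⟨2 ^ (p - 1) * ((volume (ball (0 : E) 1))⁻¹ * C₁ + C₂), by finiteness,
    fun u hu hsupp x r hr hrx ↦ ?_⟩
  set H := ENNReal.ofReal (hardyDifference p 1 u)
  set ρ := ENNReal.ofReal (r ^ (-finrank ℝ E : ℝ))
  have hdist : ∀ z ∈ ball x r, r ≤ 1 - ‖z‖ := fun z hz ↦ by
    have := norm_le_norm_add_norm_sub' z x
    rw [mem_ball_iff_norm] at hz
    linarith
  have hball : ball x r ⊆ ball 0 1 := fun z hz ↦ mem_ball_zero_iff.2 (by linarith [hdist z hz])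
  have pointwise : ∀ z ∈ ball x r, ‖fderiv ℝ u z‖ₑ ^ p ≤
      2 ^ (p - 1) * (‖twistedGradient p u z‖ₑ ^ p + C₂ * ρ * H) := fun z hz ↦ by
    refine (hfderiv u hu hsupp z (mem_ball_zero_iff.1 (hball hz))).trans ?_
    have : ENNReal.ofReal ((1 - ‖z‖) ^ (-finrank ℝ E : ℝ)) ≤ ρ := ENNReal.ofReal_le_ofReal
      (Real.rpow_le_rpow_of_nonpos hr (hdist z hz) (by linarith))
    gcongr
  calc ⨍⁻ z in ball x r, ‖fderiv ℝ u z‖ₑ ^ p ∂volume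
      ≤ 2 ^ (p - 1) * (⨍⁻ z in ball x r, ‖twistedGradient p u z‖ₑ ^ p ∂volume + C₂ * ρ * H) :=
        setLAverage_le_mul_setLAverage_add measurableSet_ball (by finiteness) pointwise
    _ ≤ 2 ^ (p - 1) * (ρ * (volume (ball (0 : E) 1))⁻¹ * (C₁ * H) + C₂ * ρ * H) := by
        rw [setLAverage_ball_eq _ hr]
        gcongr
        exact (lintegral_mono_set hball).trans (hgrad u hu hsupp)
    _ = _ := by ring

theorem exists_enorm_sub_le_of_mem_ball (hE : 2 ≤ finrank ℝ E) (hp : finrank ℝ E < p) :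
    ∃ C : ℝ≥0∞, C ≠ ∞ ∧ ∀ u : E → ℝ, ContDiff ℝ 1 u → tsupport u ⊆ ball 0 1 → ∀ (x y : E) (r : ℝ),
      2 * r ≤ 1 - ‖x‖ → y ∈ ball x r →
      ‖u x - u y‖ₑ ≤ C * ENNReal.ofReal (r ^ (1 - finrank ℝ E / p)) *
        ENNReal.ofReal (hardyDifference p 1 u) ^ (1 / p) := by
  have hp1 : 1 < p := lt_of_le_of_lt (by exact_mod_cast one_le_two.trans hE) hp
  have hp0 : 0 < p := by linarith
  have hnp : 0 < 1 - finrank ℝ E / p := sub_pos.2 ((div_lt_one hp0).2 hp)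
  obtain ⟨C, hC, hmean⟩ := exists_setLAverage_enorm_fderiv_rpow_le_hardyDifference hE hp
  refine ⟨ENNReal.ofReal (4 / (1 - finrank ℝ E / p)) * C ^ (1 / p), by finiteness,
    fun u hu hsupp x y r hrx hy ↦ ?_⟩
  have hr : 0 < r := pos_of_mem_ball hy
  have rpow_add : r ^ (1 - finrank ℝ E / p) = r * (r ^ (-finrank ℝ E : ℝ)) ^ (1 / p) := by
    rw [← Real.rpow_mul hr.le, neg_mul, mul_one_div, sub_eq_add_neg, Real.rpow_add hr,
      Real.rpow_one]
  refine (enorm_sub_le_of_mem_ball (μ := volume) hp1.le hp hu.contDiffOn (mem_ball_self hr)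
    hy).trans ?_
  calc _ ≤ ENNReal.ofReal (4 * r / (1 - finrank ℝ E / p)) *
        (C * ENNReal.ofReal (r ^ (-finrank ℝ E : ℝ)) *
          ENNReal.ofReal (hardyDifference p 1 u)) ^ (1 / p) := by
        gcongr
        exact hmean u hu hsupp x r hr hrx
    _ = _ := by
        rw [ENNReal.mul_rpow_of_nonneg _ _ (by positivity),
          ENNReal.mul_rpow_of_nonneg _ _ (by positivity),
          ENNReal.ofReal_rpow_of_pos (by positivity), rpow_add, ENNReal.ofReal_mul hr.le,
          mul_div_right_comm, ENNReal.ofReal_mul (by positivity)]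
        ring

theorem exists_enorm_sub_le_of_le_dist (hE : 2 ≤ finrank ℝ E) (hp : finrank ℝ E < p) :
    ∃ C : ℝ≥0∞, C ≠ ∞ ∧ ∀ u : E → ℝ, ContDiff ℝ 1 u → tsupport u ⊆ ball 0 1 →
      ∀ x y : E, ‖x‖ < 1 → ‖y‖ < 1 → 1 - ‖x‖ ≤ 4 * dist x y →
      ‖u x - u y‖ₑ ≤ C * ENNReal.ofReal (dist x y ^ (1 - finrank ℝ E / p)) *
        ENNReal.ofReal (hardyDifference p 1 u) ^ (1 / p) := by
  have hp0 : 0 < p := (Nat.cast_nonneg _).trans_lt hp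
  have hnp : 0 < 1 - finrank ℝ E / p := sub_pos.2 ((div_lt_one hp0).2 hp)
  obtain ⟨C, hC, hsup⟩ := exists_enorm_le_hardyDifference hE hp
  refine ⟨2 * C * ENNReal.ofReal (5 ^ (1 - finrank ℝ E / p)), by finiteness,
    fun u hu hsupp x y hx hy hxy ↦ ?_⟩
  set J := ENNReal.ofReal (hardyDifference p 1 u) ^ (1 / p)
  have value_le : ∀ z : E, ‖z‖ < 1 → 1 - ‖z‖ ≤ 5 * dist x y →
      ‖u z‖ₑ ≤ C * ENNReal.ofReal ((5 * dist x y) ^ (1 - finrank ℝ E / p)) * J :=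
    fun z hz hzd ↦ (hsup u hu hsupp z hz).trans (by gcongr)
  have hyx : ‖x‖ - ‖y‖ ≤ dist x y := (norm_sub_norm_le x y).trans_eq (dist_eq_norm x y).symm
  calc ‖u x - u y‖ₑ ≤ ‖u x‖ₑ + ‖u y‖ₑ := enorm_sub_le
    _ ≤ 2 * (C * ENNReal.ofReal ((5 * dist x y) ^ (1 - finrank ℝ E / p)) * J) := by
        rw [two_mul]
        exact add_le_add (value_le x hx (by linarith [dist_nonneg (x := x) (y := y)]))
          (value_le y hy (by linarith))
    _ = _ := by
        rw [Real.mul_rpow (by norm_num) dist_nonneg, ENNReal.ofReal_mul (by positivity)]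
        ring

theorem exists_abs_sub_le_of_unitBall (hE : 2 ≤ finrank ℝ E) (hp : finrank ℝ E < p) :
    ∃ C : ℝ, 0 < C ∧ ∀ u : E → ℝ, ContDiff ℝ 1 u → tsupport u ⊆ ball 0 1 →
      ∀ x ∈ ball 0 1, ∀ y ∈ ball 0 1,
      |u x - u y| ≤ C * dist x y ^ (1 - finrank ℝ E / p) * hardyDifference p 1 u ^ (1 / p) := by
  have hE' : (2 : ℝ) ≤ finrank ℝ E := by exact_mod_cast hE
  have hp0 : 0 < p := by linarith
  obtain ⟨C₁, hC₁, near⟩ := exists_enorm_sub_le_of_mem_ball hE hp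
  obtain ⟨C₂, hC₂, far⟩ := exists_enorm_sub_le_of_le_dist hE hp
  set C : ℝ≥0∞ := max (C₁ * ENNReal.ofReal (2 ^ (1 - finrank ℝ E / p))) C₂ + 1
  have hC : C ≠ ∞ := by finiteness
  refine ⟨C.toReal, ENNReal.toReal_pos (by simp [C]) hC, fun u hu hsupp x hx y hy ↦ ?_⟩
  rw [mem_ball_zero_iff] at hx hy
  have hH := hardyDifference_one_nonneg (by lia) (by linarith : 2 ≤ p) hu hsupp
  rw [← ENNReal.ofReal_le_ofReal_iff (by positivity), ENNReal.ofReal_mul (by positivity),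
    ENNReal.ofReal_mul (by positivity), ENNReal.ofReal_toReal hC,
    ← ENNReal.ofReal_rpow_of_nonneg hH (by positivity), ← Real.enorm_eq_ofReal_abs]
  rcases le_or_gt (1 - ‖x‖) (4 * dist x y) with h | h
  · refine (far u hu hsupp x y hx hy h).trans ?_
    gcongr
    exact (le_max_right _ _).trans le_self_add
  rcases eq_or_ne x y with rfl | hxy
  · simp
  · refine (near u hu hsupp x y (2 * dist x y) (by linarith) ?_).trans ?_
    · rw [mem_ball']
      linarith [dist_pos.2 hxy]
    rw [Real.mul_rpow two_pos.le dist_nonneg, ENNReal.ofReal_mul (by positivity), ← mul_assoc]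
    gcongr
    exact (le_max_left _ _).trans le_self_add

end UnitBall

section Scaling

variable {E : Type*} [NormedAddCommGroup E] [InnerProductSpace ℝ E] {R p : ℝ}

theorem tsupport_comp_smul_subset_ball {u : E → ℝ} (hR : 0 < R) (hsupp : tsupport u ⊆ ball 0 R) :
    tsupport (fun z ↦ u (R • z)) ⊆ ball 0 1 := fun z hz ↦ by
  have h : R • z ∈ ball 0 R :=
    hsupp (tsupport_comp_subset_preimage u (f := fun z : E ↦ R • z) (by fun_prop) hz)
  rwa [mem_ball_zero_iff, norm_smul_of_nonneg hR.le, mul_lt_iff_lt_one_right hR,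
    ← mem_ball_zero_iff] at h

variable [FiniteDimensional ℝ E] [MeasurableSpace E] [BorelSpace E]

theorem setIntegral_rpow_mul_comp_smul (hR : 0 < R) (p : ℝ) (f : E → ℝ) :
    ∫ z in ball (0 : E) 1, R ^ p * f (R • z) =
      R ^ (p - finrank ℝ E) * ∫ z in ball (0 : E) R, f z := by
  rw [integral_const_mul, Measure.setIntegral_comp_smul_of_pos volume f _ hR,
    smul_unitBall hR.ne', Real.norm_of_nonneg hR.le, smul_eq_mul, Real.rpow_sub hR,
    Real.rpow_natCast]
  ring

theorem hardyDifference_comp_smul (hR : 0 < R) (p : ℝ) (u : E → ℝ) :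
    hardyDifference p 1 (fun z ↦ u (R • z)) =
      R ^ (p - finrank ℝ E) * hardyDifference p R u := by
  have gradient_term : ∫ z in ball (0 : E) 1, ‖fderiv ℝ (fun z ↦ u (R • z)) z‖ ^ p =
      R ^ (p - finrank ℝ E) * ∫ z in ball (0 : E) R, ‖fderiv ℝ u z‖ ^ p := by
    rw [← setIntegral_rpow_mul_comp_smul hR]
    congr 1 with z
    rw [fderiv_comp_smul, norm_smul, Real.norm_of_nonneg hR.le,
      Real.mul_rpow hR.le (norm_nonneg _)]
  have hardy_term : ∫ z in ball (0 : E) 1, |u (R • z)| ^ p / (1 - ‖z‖) ^ p =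
      R ^ (p - finrank ℝ E) * ∫ z in ball (0 : E) R, |u z| ^ p / (R - ‖z‖) ^ p := by
    rw [← setIntegral_rpow_mul_comp_smul hR]
    refine setIntegral_congr_fun measurableSet_ball fun z hz ↦ ?_
    have hd : 0 < 1 - ‖z‖ := sub_pos.2 (mem_ball_zero_iff.1 hz)
    rw [norm_smul_of_nonneg hR.le, show R - R * ‖z‖ = R * (1 - ‖z‖) by ring,
      Real.mul_rpow hR.le hd.le]
    field_simp
  rw [hardyDifference, gradient_term, hardy_term, hardyDifference]
  ring

theorem hardy_morrey_ball_boundary_general (hE : 2 ≤ finrank ℝ E) (hp : finrank ℝ E < p) :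
    ∃ c : ℝ, 0 < c ∧ ∀ R : ℝ, 0 < R → ∀ u : E → ℝ, ContDiff ℝ 1 u → tsupport u ⊆ ball 0 R →
      ∀ x ∈ ball 0 R, ∀ y ∈ ball 0 R,
      |u x - u y| ≤ c * dist x y ^ (1 - finrank ℝ E / p) * hardyDifference p R u ^ (1 / p) := by
  have hE' : (2 : ℝ) ≤ finrank ℝ E := by exact_mod_cast hE
  have hp0 : 0 < p := by linarith
  obtain ⟨c, hc, unit_ball⟩ := exists_abs_sub_le_of_unitBall hE hp
  refine ⟨c, hc, fun R hR u hu hsupp x hx y hy ↦ ?_⟩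
  have hu' : ContDiff ℝ 1 fun z ↦ u (R • z) := hu.comp (contDiff_const_smul R)
  have hsupp' := tsupport_comp_smul_subset_ball hR hsupp
  have mem_unit_ball : ∀ z ∈ ball (0 : E) R, R⁻¹ • z ∈ ball 0 1 := fun z hz ↦ by
    rwa [mem_ball_zero_iff, norm_smul_of_nonneg (by positivity), inv_mul_lt_one₀ hR,
      ← mem_ball_zero_iff]
  have scaled := unit_ball _ hu' hsupp' _ (mem_unit_ball x hx) _ (mem_unit_ball y hy)
  have hH : 0 ≤ hardyDifference p R u := by
    have := hardyDifference_one_nonneg (by lia) (by linarith : 2 ≤ p) hu' hsupp'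
    rw [hardyDifference_comp_smul hR] at this
    exact nonneg_of_mul_nonneg_right this (by positivity)
  simp only [smul_inv_smul₀ hR.ne'] at scaled
  refine scaled.trans_eq ?_
  rw [hardyDifference_comp_smul hR, dist_smul₀, Real.norm_of_nonneg (by positivity),
    Real.mul_rpow (by positivity) dist_nonneg, Real.mul_rpow (by positivity) hH,
    ← Real.rpow_mul hR.le, Real.inv_rpow hR.le,
    show (p - finrank ℝ E) * (1 / p) = 1 - finrank ℝ E / p by field_simp]
  field_simp

end Scaling

theorem inv_one_sub_log_rpow_le_one {t q : ℝ} (ht0 : 0 ≤ t) (ht1 : t ≤ 1) (hq : 0 ≤ q) :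
    (1 - Real.log t)⁻¹ ^ q ≤ 1 := by
  have hlog := Real.log_nonpos ht0 ht1
  exact Real.rpow_le_one (inv_nonneg.2 (by linarith)) (inv_le_one_of_one_le₀ (by linarith)) hq

/-- Hardy–Morrey inequality on a ball, distance to the boundary. -/
theorem hardy_morrey_ball_boundary (n : ℕ) (hn : 2 ≤ n) (p : ℝ) (hp : (n : ℝ) < p) :
    ∃ b c : ℝ, 1 ≤ b ∧ 0 < c ∧
      ∀ R : ℝ, 0 < R →
      ∀ u : EuclideanSpace ℝ (Fin n) → ℝ, ContDiff ℝ (⊤ : ℕ∞) u → HasCompactSupport u →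
        tsupport u ⊆ Metric.ball (0 : EuclideanSpace ℝ (Fin n)) R →
        ∀ x ∈ Metric.ball (0 : EuclideanSpace ℝ (Fin n)) R,
        ∀ y ∈ Metric.ball (0 : EuclideanSpace ℝ (Fin n)) R, x ≠ y →
          |u x - u y| * ((1 - Real.log (dist x y / (2 * b * R)))⁻¹) ^ (1 / p) ≤
            c * dist x y ^ (1 - (n : ℝ) / p) *
              ((∫ z in Metric.ball (0 : EuclideanSpace ℝ (Fin n)) R, ‖fderiv ℝ u z‖ ^ p)
                - ((p - 1) / p) ^ p *
                    ∫ z in Metric.ball (0 : EuclideanSpace ℝ (Fin n)) R,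
                      |u z| ^ p / (R - ‖z‖) ^ p) ^ (1 / p) := by
  obtain ⟨c, hc, hmorrey⟩ := hardy_morrey_ball_boundary_general
    (E := EuclideanSpace ℝ (Fin n)) (by simpa using hn) (by simpa using hp)
  rw [finrank_euclideanSpace_fin] at hmorrey
  refine ⟨1, c, le_rfl, hc, fun R hR u hu _ hsupp x hx y hy _ ↦ ?_⟩
  have hdist : dist x y / (2 * 1 * R) ≤ 1 := by
    rw [div_le_one (by positivity)]
    linarith [dist_triangle_right x y 0, mem_ball.1 hx, mem_ball.1 hy]
  have log_factor := inv_one_sub_log_rpow_le_one (q := 1 / p) (by positivity) hdist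
    (one_div_nonneg.2 ((Nat.cast_nonneg n).trans hp.le))
  exact (mul_le_of_le_one_right (abs_nonneg _) log_factor).trans
    (hmorrey R hR u (hu.of_le (by exact_mod_cast le_top)) hsupp x hx y hy)
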